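/- arXiv:2404.03813 — 7 statements merged into one kernel-verified Lean document; each statement's English description precedes it below -/
import Mathlib

section
/- For every n ≥ 1, every unit vector ψ ∈ ℂ^(2^n), and every x ∈ 𝔽₂^{2n}, the Bell difference sampling probability satisfies q_ψ(x) ≤ 1/2^n. -/
/-!
For a state `ψ` and a shift `a`, put `c_a(k) = conj ψ(k + a) * ψ(k)`. Up to a phase of modulus one,
`⟨ψ, W_{(a,b)} ψ⟩ = ∑ k, c_a(k) (-1)^{b·k}` is the Walsh–Hadamard transform of `c_a` at `b`. Two
consequences follow.

* Each expectation value has modulus at most `1`, because `2 ∑ k, |c_a(k)|` is at most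
  `∑ k, (|ψ(k + a)|² + |ψ(k)|²) = 2`; so `0 ≤ p_ψ ≤ 1/2ⁿ` pointwise (`pPure_le`).
* By Parseval on `𝔽₂ⁿ` (`walsh_parseval`), `∑ b, |⟨ψ, W_{(a,b)} ψ⟩|² = 2ⁿ ∑ k, |c_a(k)|²`, and summing
  over `a` gives `2ⁿ (∑ k, |ψ(k)|²)² = 2ⁿ`; so `∑ y, p_ψ(y) ≤ 1` (`sum_pPure_le`).

Hence `q_ψ(x) = ∑ y, p_ψ(y) p_ψ(x + y) ≤ (1/2ⁿ) ∑ y, p_ψ(y) ≤ 1/2ⁿ`.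
-/

open scoped Classical

noncomputable section

/-- `𝔽₂ⁿ`, indexing the computational basis of `ℂ^(2^n)`. -/
abbrev QIdx (n : ℕ) := Fin n → ZMod 2

/-- The phase space `𝔽₂^{2n} = 𝔽₂ⁿ × 𝔽₂ⁿ`. -/
abbrev PhSp (n : ℕ) := QIdx n × QIdx n

/-- The Weyl operator `W_{(a,b)} = i^{a'·b'} (X^{a₁}Z^{b₁}) ⊗ ⋯ ⊗ (X^{aₙ}Z^{bₙ})`,
written entrywise in the computational basis:
`(W_{(a,b)})_{j,k} = i^{a·b} · (-1)^{b·k} · [j = k + a]`. -/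
def Weyl {n : ℕ} (x : PhSp n) : Matrix (QIdx n) (QIdx n) ℂ :=
  fun j k =>
    Complex.I ^ (∑ i, (x.1 i).val * (x.2 i).val) *
      (-1 : ℂ) ^ (∑ i, (x.2 i).val * (k i).val) *
      (if j = k + x.1 then 1 else 0)

/-- The standard inner product `⟨ψ, φ⟩` on `ℂ^(2^n)` (conjugate-linear in the first slot). -/
def cinner {n : ℕ} (ψ φ : QIdx n → ℂ) : ℂ := ∑ k, starRingEnd ℂ (ψ k) * φ k

/-- `p_ψ(x) = ⟨ψ, W_x ψ⟩² / 2ⁿ`. -/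
def pPure {n : ℕ} (ψ : QIdx n → ℂ) (x : PhSp n) : ℝ :=
  (cinner ψ ((Weyl x).mulVec ψ)).re ^ 2 / 2 ^ n

/-- The Bell difference sampling distribution `q_ψ(x) = Σ_y p_ψ(y) p_ψ(x + y)`. -/
def qPure {n : ℕ} (ψ : QIdx n → ℂ) (x : PhSp n) : ℝ :=
  ∑ y : PhSp n, pPure ψ y * pPure ψ (x + y)

/-- The Walsh–Hadamard transform of `c` at `b`. -/
def walsh {n : ℕ} (c : QIdx n → ℂ) (b : QIdx n) : ℂ :=
  ∑ k, c k * (-1 : ℂ) ^ (∑ i, (b i).val * (k i).val)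

/-- Orthogonality of the characters of `𝔽₂ⁿ`; the sum over `b` factors over the coordinates. -/
theorem walsh_orthogonality {n : ℕ} (k l : QIdx n) :
    ∑ b : QIdx n, (-1 : ℂ) ^ (∑ i, (b i).val * (k i).val) *
      (-1 : ℂ) ^ (∑ i, (b i).val * (l i).val) = if k = l then 2 ^ n else 0 := by
  have coord (u v : ZMod 2) : ∑ t : ZMod 2, (-1 : ℂ) ^ (t.val * u.val) * (-1 : ℂ) ^ (t.val * v.val)
      = if u = v then 2 else 0 := by
    have hs (f : ZMod 2 → ℂ) : ∑ t, f t = f 0 + f 1 := Fin.sum_univ_two f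
    have v1 : (1 : ZMod 2).val = 1 := rfl
    have h (w : ZMod 2) : w = 0 ∨ w = 1 := by revert w; decide
    rw [hs]
    rcases h u with rfl | rfl <;> rcases h v with rfl | rfl <;> norm_num [v1]
  have factored : ∑ b : QIdx n, (-1 : ℂ) ^ (∑ i, (b i).val * (k i).val) *
      (-1 : ℂ) ^ (∑ i, (b i).val * (l i).val) =
      ∏ i, ∑ t : ZMod 2, (-1 : ℂ) ^ (t.val * (k i).val) * (-1 : ℂ) ^ (t.val * (l i).val) := by
    rw [Fintype.prod_sum]
    refine Finset.sum_congr rfl fun b _ => ?_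
    rw [← Finset.prod_pow_eq_pow_sum, ← Finset.prod_pow_eq_pow_sum, ← Finset.prod_mul_distrib]
  rw [factored]
  simp_rw [coord]
  split_ifs with h
  · simp [h]
  · obtain ⟨i, hi⟩ := Function.ne_iff.mp h
    exact Finset.prod_eq_zero (Finset.mem_univ i) (if_neg hi)

theorem walsh_parseval {n : ℕ} (c : QIdx n → ℂ) :
    ∑ b, ‖walsh c b‖ ^ 2 = 2 ^ n * ∑ k, ‖c k‖ ^ 2 := by
  have expand (b : QIdx n) : ((‖walsh c b‖ ^ 2 : ℝ) : ℂ) =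
      ∑ k, ∑ l, c k * starRingEnd ℂ (c l) * ((-1 : ℂ) ^ (∑ i, (b i).val * (k i).val) *
        (-1 : ℂ) ^ (∑ i, (b i).val * (l i).val)) := by
    push_cast
    rw [← Complex.mul_conj', walsh, map_sum, Finset.sum_mul_sum]
    refine Finset.sum_congr rfl fun k _ => Finset.sum_congr rfl fun l _ => ?_
    simp only [map_mul, map_pow, map_neg, map_one]
    ring
  apply Complex.ofReal_injective
  rw [Complex.ofReal_sum]
  simp_rw [expand]
  calc ∑ b : QIdx n, ∑ k, ∑ l, c k * starRingEnd ℂ (c l) *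
        ((-1 : ℂ) ^ (∑ i, (b i).val * (k i).val) * (-1 : ℂ) ^ (∑ i, (b i).val * (l i).val))
      = ∑ k, ∑ l, c k * starRingEnd ℂ (c l) * (if k = l then 2 ^ n else 0) := by
        rw [Finset.sum_comm]
        refine Finset.sum_congr rfl fun k _ => ?_
        rw [Finset.sum_comm]
        refine Finset.sum_congr rfl fun l _ => ?_
        rw [← Finset.mul_sum, walsh_orthogonality]
    _ = ((2 ^ n * ∑ k, ‖c k‖ ^ 2 : ℝ) : ℂ) := by
        simp only [mul_ite, mul_zero, Finset.sum_ite_eq, Finset.mem_univ, if_true]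
        push_cast
        rw [← Finset.sum_mul, mul_comm]
        simp_rw [Complex.mul_conj']

/-- The unnormalised autocorrelation `c_a(k) = conj ψ(k + a) * ψ(k)` of a state. -/
def autocorr {n : ℕ} (ψ : QIdx n → ℂ) (a k : QIdx n) : ℂ := starRingEnd ℂ (ψ (k + a)) * ψ k

theorem cinner_weyl {n : ℕ} (ψ : QIdx n → ℂ) (a b : QIdx n) :
    cinner ψ ((Weyl (a, b)).mulVec ψ) =
      Complex.I ^ (∑ i, (a i).val * (b i).val) * walsh (autocorr ψ a) b := by
  simp only [cinner, Weyl, Matrix.mulVec, dotProduct, walsh, autocorr, Finset.mul_sum]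
  rw [Finset.sum_comm]
  refine Finset.sum_congr rfl fun k _ => ?_
  -- only the row `j = k + a` of column `k` is nonzero
  rw [Finset.sum_eq_single (k + a) (fun j _ hj => by simp [hj]) (by simp)]
  simp only [if_true]
  ring

theorem norm_cinner_weyl {n : ℕ} (ψ : QIdx n → ℂ) (a b : QIdx n) :
    ‖cinner ψ ((Weyl (a, b)).mulVec ψ)‖ = ‖walsh (autocorr ψ a) b‖ := by
  simp [cinner_weyl]

theorem sum_norm_sq {n : ℕ} {ψ : QIdx n → ℂ} (hψ : cinner ψ ψ = 1) : ∑ k, ‖ψ k‖ ^ 2 = 1 := by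
  apply Complex.ofReal_injective
  rw [Complex.ofReal_one, ← hψ, cinner]
  push_cast
  simp_rw [Complex.conj_mul']

theorem re_sq_le_norm_sq (z : ℂ) : z.re ^ 2 ≤ ‖z‖ ^ 2 :=
  sq_le_sq.mpr (by simpa using Complex.abs_re_le_norm z)

theorem pPure_nonneg {n : ℕ} (ψ : QIdx n → ℂ) (x : PhSp n) : 0 ≤ pPure ψ x := by
  unfold pPure; positivity

theorem norm_walsh_autocorr_le {n : ℕ} {ψ : QIdx n → ℂ} (hψ : cinner ψ ψ = 1) (a b : QIdx n) :
    ‖walsh (autocorr ψ a) b‖ ≤ 1 := by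
  have shift : ∑ k, ‖ψ (k + a)‖ ^ 2 = 1 :=
    (Equiv.sum_comp (Equiv.addRight a) fun k => ‖ψ k‖ ^ 2).trans (sum_norm_sq hψ)
  calc ‖walsh (autocorr ψ a) b‖
      ≤ ∑ k, ‖autocorr ψ a k * (-1 : ℂ) ^ (∑ i, (b i).val * (k i).val)‖ := norm_sum_le _ _
    _ = ∑ k, ‖ψ (k + a)‖ * ‖ψ k‖ := by simp [autocorr]
    _ ≤ ∑ k, (‖ψ (k + a)‖ ^ 2 + ‖ψ k‖ ^ 2) / 2 :=
        Finset.sum_le_sum fun k _ => by nlinarith [sq_nonneg (‖ψ (k + a)‖ - ‖ψ k‖)]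
    _ = 1 := by
        rw [← Finset.sum_div, Finset.sum_add_distrib, shift, sum_norm_sq hψ]; norm_num

theorem pPure_le {n : ℕ} {ψ : QIdx n → ℂ} (hψ : cinner ψ ψ = 1) (x : PhSp n) :
    pPure ψ x ≤ 1 / 2 ^ n := by
  obtain ⟨a, b⟩ := x
  unfold pPure
  gcongr
  refine (re_sq_le_norm_sq _).trans ?_
  rw [norm_cinner_weyl]
  exact pow_le_one₀ (norm_nonneg _) (norm_walsh_autocorr_le hψ a b)

/-- In fact `p_ψ` is a probability distribution, but only this inequality is needed, which avoids
proving that the expectation values are real. -/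
theorem sum_pPure_le {n : ℕ} {ψ : QIdx n → ℂ} (hψ : cinner ψ ψ = 1) :
    ∑ y : PhSp n, pPure ψ y ≤ 1 := by
  have shift (k : QIdx n) : ∑ a, ‖ψ (k + a)‖ ^ 2 = 1 :=
    (Equiv.sum_comp (Equiv.addLeft k) fun k => ‖ψ k‖ ^ 2).trans (sum_norm_sq hψ)
  have mass : ∑ a, ∑ k, ‖autocorr ψ a k‖ ^ 2 = 1 := by
    rw [Finset.sum_comm]
    simp only [autocorr, norm_mul, RCLike.norm_conj, mul_pow, ← Finset.sum_mul, shift, one_mul]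
    exact sum_norm_sq hψ
  calc ∑ y : PhSp n, pPure ψ y
      ≤ ∑ y : PhSp n, ‖walsh (autocorr ψ y.1) y.2‖ ^ 2 / 2 ^ n := by
        refine Finset.sum_le_sum fun y _ => ?_
        unfold pPure
        rw [← norm_cinner_weyl]
        exact div_le_div_of_nonneg_right (re_sq_le_norm_sq _) (by positivity)
    _ = (∑ a, ∑ b, ‖walsh (autocorr ψ a) b‖ ^ 2) / 2 ^ n := by
        rw [← Finset.sum_div, Fintype.sum_prod_type]
    _ = 1 := by
        simp_rw [walsh_parseval]
        rw [← Finset.mul_sum, mass]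
        field_simp

/-- For every `n ≥ 1`, every unit vector `ψ ∈ ℂ^(2^n)`, and every `x ∈ 𝔽₂^{2n}`,
the Bell difference sampling probability satisfies `q_ψ(x) ≤ 1/2ⁿ`. -/
theorem q_psi_trivial_upper (n : ℕ) (hn : 1 ≤ n) (ψ : QIdx n → ℂ)
    (hψ : cinner ψ ψ = 1) (x : PhSp n) :
    qPure ψ x ≤ 1 / 2 ^ n := by
  calc qPure ψ x ≤ ∑ y : PhSp n, pPure ψ y * (1 / 2 ^ n) :=
        Finset.sum_le_sum fun y _ =>
          mul_le_mul_of_nonneg_left (pPure_le hψ _) (pPure_nonneg ψ y)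
    _ = (∑ y : PhSp n, pPure ψ y) * (1 / 2 ^ n) := by rw [Finset.sum_mul]
    _ ≤ 1 * (1 / 2 ^ n) := by gcongr; exact sum_pPure_le hψ
    _ = 1 / 2 ^ n := one_mul _
end
end

section
/- Let n ≥ 1, let ψ ∈ ℂ^(2^n) be a unit vector, and let S ⊆ 𝔽₂^{2n} be an 𝔽₂-linear subspace. Then Σ_{x ∈ S} q_ψ(x) ≥ (Σ_{x ∈ S} p_ψ(x))². -/
/-! Interchanging sums, the `q`-mass of `S` is `∑ y, p(y) * p(S + y)`. Since `p ≥ 0`, discarding the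
`y ∉ S` only decreases this sum, and for `y ∈ S` translation by `y` permutes `S`, so each remaining
summand is `p(y) * p(S)`; these add up to `p(S) ^ 2`. In effect, the `q`-mass of `S` is the sum of
`p(C) ^ 2` over all cosets `C` of `S`, and only the coset `S` itself is kept. -/

open scoped Classical

noncomputable section

/-- The inequality for an arbitrary nonnegative weight on a finite abelian group: the mass that the
correlation `x ↦ ∑ y, p y * p (x + y)` gives to a subgroup is at least the squared mass under `p`. -/
theorem sum_sq_le_sum_corr {G : Type*} [AddCommGroup G] [Fintype G] (S : AddSubgroup G)
    (p : G → ℝ) (hp : ∀ x, 0 ≤ p x) :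
    (∑ x ∈ Finset.univ.filter (· ∈ S), p x) ^ 2 ≤
      ∑ x ∈ Finset.univ.filter (· ∈ S), ∑ y, p y * p (x + y) := by
  rw [Finset.sum_comm, sq, Finset.sum_mul]
  calc ∑ y ∈ Finset.univ.filter (· ∈ S), p y * ∑ x ∈ Finset.univ.filter (· ∈ S), p x
      = ∑ y ∈ Finset.univ.filter (· ∈ S),
        ∑ x ∈ Finset.univ.filter (· ∈ S), p y * p (x + y) := by
        refine Finset.sum_congr rfl fun y hy => ?_
        have hyS : y ∈ S := (Finset.mem_filter.mp hy).2
        rw [← Finset.mul_sum]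
        congr 1
        refine (Finset.sum_equiv (Equiv.addRight y) (fun x => ?_) fun x _ => rfl).symm
        simp [S.add_mem_cancel_right hyS]
    _ ≤ ∑ y, ∑ x ∈ Finset.univ.filter (· ∈ S), p y * p (x + y) :=
        Finset.sum_le_sum_of_subset_of_nonneg (Finset.filter_subset _ _) fun y _ _ =>
        Finset.sum_nonneg fun x _ => mul_nonneg (hp _) (hp _)

/-- For a unit vector `ψ` and an `𝔽₂`-linear subspace `S ⊆ 𝔽₂^{2n}`,
`Σ_{x ∈ S} q_ψ(x) ≥ (Σ_{x ∈ S} p_ψ(x))²`. -/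
theorem q_mass_ge_p_mass_sq (n : ℕ) (hn : 1 ≤ n) (ψ : QIdx n → ℂ)
    (hψ : cinner ψ ψ = 1) (S : Submodule (ZMod 2) (PhSp n)) :
    (∑ x ∈ Finset.univ.filter (· ∈ S), pPure ψ x) ^ 2 ≤
      ∑ x ∈ Finset.univ.filter (· ∈ S), qPure ψ x := by
  have p_nonneg : ∀ x, 0 ≤ pPure ψ x := fun x => by unfold pPure; positivity
  simpa only [qPure, Submodule.mem_toAddSubgroup] using
    sum_sq_le_sum_corr S.toAddSubgroup (pPure ψ) p_nonneg
end
end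

section
/- Let n ≥ 1 and 0 < τ ≤ 1. Identify 𝔽₂^{2n} with (𝔽₂²)^n by grouping coordinates as x_j = (a_j, b_j) ∈ 𝔽₂². Let w₁, …, w_n ∈ 𝔽₂² be nonzero and let S = {x : ∀ j, x_j ∈ {(0,0), w_j}} (a stabilizer product group). Let Y : 𝔽₂^{2n} → ℝ≥0 be a probability distribution (Σ_x Y(x) = 1) supported on S and satisfying Y(x) ≤ 1/(τ⁴ · 2^n) for all x. Fix 1/2 < p < 1. Then the number of indices j ∈ {1, …, n} for which the marginal probability Pr_{x ∼ Y}[x_j = (0,0)] exceeds p is at most 4 log₂(1/τ) / (1 − H₂(p)), where H₂(p) := −p log₂ p − (1−p) log₂(1−p) is the binary entropy. -/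
/-!
The proof is Gibbs' inequality against a product distribution. Call `j` heavy if its marginal
`m j = Pr[x j = 0]` exceeds `p`. Let `Q` be the product distribution on the stabilizer product group
whose `j`-th factor gives `0` and `w j` the weights `p` and `1 - p` if `j` is heavy, and `1/2`
each otherwise. With `M = 1 / (τ⁴ 2ⁿ)` the pointwise bound on `Y`, the inequality `log t ≤ t - 1`
gives `∑ Y log (Q / M) ≤ ∑ Y (Q / M) - 1 ≤ ∑ Q - 1 = 0`. The left side splits over coordinates as
`4 log τ + ∑ j heavy, (m j log (2p) + (1 - m j) log (2(1-p)))`, and since `p > 1/2` each summand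
is at least its value `log 2 - H(p)` at `m j = p`, where `H` is the natural-log entropy. So
`#heavy * (log 2 - H(p)) ≤ -4 log τ`, which is the claim up to the base of the logarithm.
-/

open scoped Classical

noncomputable section

/-- The binary entropy function `H₂(p) = -p log₂ p - (1-p) log₂ (1-p)`. -/
def binEnt (p : ℝ) : ℝ := -(p * Real.logb 2 p) - (1 - p) * Real.logb 2 (1 - p)

/-- Twice the single-coordinate weight: `a` at `0`, `b` at `w`, and zero elsewhere. The factor `2`
is absorbed here so that a coordinate with `a = b = 1` contributes nothing to the logarithm. -/
def coordWeight (w : ZMod 2 × ZMod 2) (a b : ℝ) (v : ZMod 2 × ZMod 2) : ℝ :=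
  if v = 0 then a else if v = w then b else 0

lemma coordWeight_nonneg (w : ZMod 2 × ZMod 2) {a b : ℝ} (ha : 0 ≤ a) (hb : 0 ≤ b)
    (v : ZMod 2 × ZMod 2) : 0 ≤ coordWeight w a b v := by
  unfold coordWeight
  split_ifs <;> simp [ha, hb]

lemma sum_coordWeight {w : ZMod 2 × ZMod 2} (hw : w ≠ 0) (a b : ℝ) :
    ∑ v, coordWeight w a b v = a + b := by
  have h : ∀ v, coordWeight w a b v = (if v = 0 then a else 0) + (if v = w then b else 0) := by
    intro v
    unfold coordWeight
    by_cases h0 : v = 0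
    · simp [h0, hw.symm]
    · simp [h0]
  simp only [h, Finset.sum_add_distrib, Finset.sum_ite_eq', Finset.mem_univ, if_true]

lemma binEnt_eq (p : ℝ) : binEnt p = Real.binEntropy p / Real.log 2 := by
  simp only [binEnt, Real.binEntropy, Real.logb, Real.log_inv]
  ring

/-- Gibbs' inequality for `Y` against the product distribution with density
`∏ j, coordWeight (w j) (a j) (b j) (x j) / 2`. -/
lemma gibbs_product (n : ℕ) (τ : ℝ) (hτ0 : 0 < τ)
    (w : Fin n → ZMod 2 × ZMod 2) (hw : ∀ j, w j ≠ 0)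
    (Y : (Fin n → ZMod 2 × ZMod 2) → ℝ)
    (hY0 : ∀ x, 0 ≤ Y x) (hY1 : ∑ x, Y x = 1)
    (hsupp : ∀ x, Y x ≠ 0 → ∀ j, x j = 0 ∨ x j = w j)
    (hbound : ∀ x, Y x ≤ 1 / (τ ^ 4 * 2 ^ n))
    (a b : Fin n → ℝ) (ha : ∀ j, 0 < a j) (hb : ∀ j, 0 < b j) (hab : ∀ j, a j + b j = 2) :
    4 * Real.log τ + ∑ j, ∑ x, Y x * Real.log (coordWeight (w j) (a j) (b j) (x j)) ≤ 0 := by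
  set R : (Fin n → ZMod 2 × ZMod 2) → ℝ :=
    fun x => ∏ j, coordWeight (w j) (a j) (b j) (x j) with hR
  have hR0 : ∀ x, 0 ≤ R x := fun x =>
    Finset.prod_nonneg fun j _ => coordWeight_nonneg _ (ha j).le (hb j).le _
  have hRsum : ∑ x, R x = 2 ^ n := by
    rw [hR, ← Fintype.prod_sum (fun j v => coordWeight (w j) (a j) (b j) v)]
    simp [sum_coordWeight (hw _), hab]
  have key : ∀ x, Y x * (4 * Real.log τ + ∑ j, Real.log (coordWeight (w j) (a j) (b j) (x j)))
      ≤ R x / 2 ^ n - Y x := by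
    intro x
    by_cases hx : Y x = 0
    · rw [hx]
      have := hR0 x
      simp only [zero_mul, sub_zero]
      positivity
    have hpos : ∀ j, 0 < coordWeight (w j) (a j) (b j) (x j) := by
      intro j
      unfold coordWeight
      split_ifs with h1 h2
      · exact ha j
      · exact hb j
      · exact absurd (hsupp x hx j) (by simp [h1, h2])
    have hRpos : 0 < R x := Finset.prod_pos fun j _ => hpos j
    have hlog : 4 * Real.log τ + ∑ j, Real.log (coordWeight (w j) (a j) (b j) (x j))
        = Real.log (τ ^ 4 * R x) := by
      rw [Real.log_mul (by positivity) hRpos.ne', Real.log_pow, hR,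
        Real.log_prod (fun j _ => (hpos j).ne')]
      norm_num
    rw [hlog]
    have h1 : Real.log (τ ^ 4 * R x) ≤ τ ^ 4 * R x - 1 :=
      Real.log_le_sub_one_of_pos (by positivity)
    calc Y x * Real.log (τ ^ 4 * R x) ≤ Y x * (τ ^ 4 * R x - 1) :=
          mul_le_mul_of_nonneg_left h1 (hY0 x)
      _ = Y x * (τ ^ 4 * R x) - Y x := by ring
      _ ≤ 1 / (τ ^ 4 * 2 ^ n) * (τ ^ 4 * R x) - Y x := by
          gcongr
          exact hbound x
      _ = R x / 2 ^ n - Y x := by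
          field_simp
  have hsum := Finset.sum_le_sum fun x (_ : x ∈ Finset.univ) => key x
  rw [Finset.sum_sub_distrib, ← Finset.sum_div, hRsum, hY1, div_self (by positivity), sub_self]
    at hsum
  simp only [mul_add, Finset.sum_add_distrib, ← Finset.sum_mul, hY1, one_mul, Finset.mul_sum]
    at hsum
  rwa [Finset.sum_comm] at hsum

/-- The expected log-weight of a coordinate with marginal above `p` is at least the entropy
deficit `log 2 - H(p)`, because it is increasing in the marginal. -/
lemma heavy_coord {n : ℕ} (w : Fin n → ZMod 2 × ZMod 2)
    (Y : (Fin n → ZMod 2 × ZMod 2) → ℝ) (hY1 : ∑ x, Y x = 1)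
    (hsupp : ∀ x, Y x ≠ 0 → ∀ j, x j = 0 ∨ x j = w j)
    (p : ℝ) (hp1 : 1 / 2 < p) (hp2 : p < 1) (j : Fin n)
    (hj : p < ∑ x ∈ Finset.univ.filter (fun x => x j = 0), Y x) :
    Real.log 2 - Real.binEntropy p
      ≤ ∑ x, Y x * Real.log (coordWeight (w j) (2 * p) (2 * (1 - p)) (x j)) := by
  have hterm : ∀ x, Y x * Real.log (coordWeight (w j) (2 * p) (2 * (1 - p)) (x j))
      = Y x * Real.log (2 * (1 - p))
        + (if x j = 0 then Y x else 0) * (Real.log (2 * p) - Real.log (2 * (1 - p))) := by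
    intro x
    by_cases hx : Y x = 0
    · simp [hx]
    unfold coordWeight
    by_cases h0 : x j = 0
    · simp only [h0, if_true]
      ring
    · have hxw : x j = w j := (hsupp x hx j).resolve_left h0
      simp only [h0, if_false, if_pos hxw]
      ring
  simp only [hterm, Finset.sum_add_distrib, ← Finset.sum_mul, hY1, ← Finset.sum_filter]
  have hlt : Real.log (1 - p) < Real.log p := Real.log_lt_log (by linarith) (by linarith)
  rw [Real.log_mul (by norm_num) (by linarith), Real.log_mul (by norm_num) (by linarith)]
  simp only [Real.binEntropy, Real.log_inv]
  nlinarith [mul_pos (sub_pos.2 hj) (sub_pos.2 hlt)]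

/-- Entropy-counting lemma: if `Y` is a probability distribution on `(𝔽₂²)ⁿ` supported on a
stabilizer product group `S = {x : ∀ j, x j ∈ {0, w j}}` (with each `w j ≠ 0`) satisfying
`Y(x) ≤ 1/(τ⁴ 2ⁿ)` pointwise, and `1/2 < p < 1`, then the number of coordinates `j` whose
marginal probability of being `(0,0)` exceeds `p` is at most `4 log₂(1/τ) / (1 - H₂(p))`. -/
theorem few_heavy_identity_marginals (n : ℕ) (hn : 1 ≤ n)
    (τ : ℝ) (hτ0 : 0 < τ) (hτ1 : τ ≤ 1)
    (w : Fin n → ZMod 2 × ZMod 2) (hw : ∀ j, w j ≠ 0)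
    (Y : (Fin n → ZMod 2 × ZMod 2) → ℝ)
    (hY0 : ∀ x, 0 ≤ Y x) (hY1 : ∑ x, Y x = 1)
    (hsupp : ∀ x, Y x ≠ 0 → ∀ j, x j = 0 ∨ x j = w j)
    (hbound : ∀ x, Y x ≤ 1 / (τ ^ 4 * 2 ^ n))
    (p : ℝ) (hp1 : 1 / 2 < p) (hp2 : p < 1) :
    ((Finset.univ.filter
        (fun j : Fin n => p < ∑ x ∈ Finset.univ.filter (fun x => x j = 0), Y x)).card : ℝ)
      ≤ 4 * Real.logb 2 (1 / τ) / (1 - binEnt p) := by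
  set heavy := Finset.univ.filter
    (fun j : Fin n => p < ∑ x ∈ Finset.univ.filter (fun x => x j = 0), Y x)
  have hg := gibbs_product n τ hτ0 w hw Y hY0 hY1 hsupp hbound
    (fun j => if j ∈ heavy then 2 * p else 1) (fun j => if j ∈ heavy then 2 * (1 - p) else 1)
    (fun j => by split_ifs <;> linarith)
    (fun j => by split_ifs <;> linarith)
    (fun j => by split_ifs <;> ring)
  have hcoord : ∀ j, (if j ∈ heavy then Real.log 2 - Real.binEntropy p else 0)
      ≤ ∑ x, Y x * Real.log (coordWeight (w j) (if j ∈ heavy then 2 * p else 1)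
          (if j ∈ heavy then 2 * (1 - p) else 1) (x j)) := by
    intro j
    by_cases hj : j ∈ heavy
    · simp only [hj, if_true]
      exact heavy_coord w Y hY1 hsupp p hp1 hp2 j (Finset.mem_filter.1 hj).2
    · simp only [hj, if_false]
      refine (Finset.sum_eq_zero fun x _ => ?_).ge
      -- Weight `0` off the support is harmless here, since `Real.log 0 = 0`.
      unfold coordWeight
      split_ifs <;> simp
  have hsum := Finset.sum_le_sum fun j (_ : j ∈ Finset.univ) => hcoord j
  rw [← Finset.sum_filter, Finset.filter_mem_eq_inter, Finset.univ_inter, Finset.sum_const,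
    nsmul_eq_mul] at hsum
  have hlog2 : 0 < Real.log 2 := Real.log_pos (by norm_num)
  have hdef : Real.binEntropy p < Real.log 2 :=
    Real.binEntropy_lt_log_two.2 (by norm_num; linarith)
  have hden : 1 - binEnt p = (Real.log 2 - Real.binEntropy p) / Real.log 2 := by
    rw [binEnt_eq]
    field_simp
  rw [hden, le_div_iff₀ (div_pos (sub_pos.2 hdef) hlog2), Real.logb, one_div, Real.log_inv,
    ← mul_div_assoc, ← mul_div_assoc]
  refine div_le_div_of_nonneg_right ?_ hlog2.le
  linarith
end
end

section
/- Let n ≥ 1, let ρ be a 2^n × 2^n positive semidefinite Hermitian complex matrix with trace 1 (a density matrix), and let φ ∈ ℂ^(2^n) be a stabilizer state with ⟨φ, ρ φ⟩ = τ. Let S_φ be the unsigned stabilizer set of φ. Then Σ_{x ∈ S_φ} q_ρ(x) ≥ τ⁴. -/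
/-!
Write `S = S_φ`, `N = 2ⁿ`, `t_a = Re tr(W_a ρ)`, and `W_a φ = s_a φ` with `s_a = ±1` for `a ∈ S`.

*Isotropy.* Weyl operators satisfy `W_x W_y = c W_{x+y}` with a nonzero phase `c`,
`W_x W_y = (-1)^{[x,y]} W_y W_x` and `W_x² = 1`. Evaluating these on `φ ≠ 0` shows that `S` is closed
under addition (`add_mem_stabSet`) and that `[x,y] = 0` on `S` (`symp_eq_zero`). Hence the character
sum `Σ_{x ∈ S} (-1)^{[x,a]}` is nonnegative for every `a` and equals `N` for `a ∈ S`, so exchanging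
sums gives `Σ_{x ∈ S} q_ρ(x) ≥ N Σ_{a ∈ S} p_ρ(a)² = N⁻¹ Σ_{a ∈ S} t_a⁴`. Only the inclusion
`S ⊆ S^⊥` is used, not equality.

*Projector.* By Hermiticity and the trace orthogonality of the Weyl operators, the Hermitian matrix
`φφ† - N⁻¹ Σ_{a ∈ S} s_a W_a` has squared Frobenius norm `1 - 2 + |S| / N = 0`, so `φφ†` is the
stabilizer average `N⁻¹ Σ_{a ∈ S} s_a W_a` (`proj_eq`). Pairing with `ρ` gives
`τ = N⁻¹ Σ_{a ∈ S} s_a t_a`, and two applications of Cauchy–Schwarz yield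
`τ⁴ ≤ N⁻¹ Σ_{a ∈ S} t_a⁴`.
-/

open scoped Classical ComplexOrder

noncomputable section

/-- The symplectic product `[x, y] = a·d + b·c` of `x = (a,b)`, `y = (c,d) ∈ 𝔽₂^{2n}`. -/
def symp {n : ℕ} (x y : PhSp n) : ZMod 2 :=
  ∑ i, (x.1 i * y.2 i + x.2 i * y.1 i)

/-- `p_ρ(x) = tr(W_x ρ)² / 2ⁿ` for a density matrix `ρ`. -/
def pMixed {n : ℕ} (ρ : Matrix (QIdx n) (QIdx n) ℂ) (x : PhSp n) : ℝ :=
  ((Weyl x * ρ).trace).re ^ 2 / 2 ^ n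

/-- `q_ρ(x) = Σ_a (−1)^{[x,a]} p_ρ(a)²` for a density matrix `ρ`. -/
def qMixed {n : ℕ} (ρ : Matrix (QIdx n) (QIdx n) ℂ) (x : PhSp n) : ℝ :=
  ∑ a : PhSp n, (-1 : ℝ) ^ (symp x a).val * pMixed ρ a ^ 2

/-- The unsigned stabilizer set `S_φ = {x : W_x φ = ± φ}`. -/
def stabSet {n : ℕ} (φ : QIdx n → ℂ) : Finset (PhSp n) :=
  Finset.univ.filter (fun x => (Weyl x).mulVec φ = φ ∨ (Weyl x).mulVec φ = -φ)

/-! ### Signs, dot products and phases -/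

/-- The sign `(-1)^z ∈ R` of a bit `z ∈ 𝔽₂`. -/
def sgn (R : Type*) [Ring R] (z : ZMod 2) : R := (-1) ^ z.val

lemma sgn_natCast (R : Type*) [Ring R] (m : ℕ) : (-1 : R) ^ m = sgn R (m : ZMod 2) := by
  rw [sgn, ZMod.val_natCast, ← neg_one_pow_eq_pow_mod_two]

lemma sgn_add (R : Type*) [Ring R] (a b : ZMod 2) : sgn R (a + b) = sgn R a * sgn R b := by
  rw [sgn, sgn, sgn, ← pow_add, sgn_natCast, sgn_natCast R (a.val + b.val)]
  simp

lemma sgn_zero (R : Type*) [Ring R] : sgn R 0 = 1 := by simp [sgn]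

lemma sgn_one (R : Type*) [Ring R] : sgn R 1 = -1 := by simp [sgn, ZMod.val_one]

lemma zmod2_cases (z : ZMod 2) : z = 0 ∨ z = 1 := by
  revert z; decide

lemma sgn_mul_self (R : Type*) [Ring R] (a : ZMod 2) : sgn R a * sgn R a = 1 := by
  rcases zmod2_cases a with rfl | rfl <;> simp [sgn_zero, sgn_one]

lemma star_sgn (a : ZMod 2) : star (sgn ℂ a) = sgn ℂ a := by
  simp [sgn]

/-- The dot product `b · k` over `𝔽₂`. -/
def dot2 {n : ℕ} (b k : QIdx n) : ZMod 2 := ∑ i, b i * k i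

lemma dot2_add_right {n : ℕ} (b k l : QIdx n) : dot2 b (k + l) = dot2 b k + dot2 b l := by
  simp [dot2, mul_add, Finset.sum_add_distrib]

lemma dot2_add_left {n : ℕ} (b c k : QIdx n) : dot2 (b + c) k = dot2 b k + dot2 c k := by
  simp [dot2, add_mul, Finset.sum_add_distrib]

lemma symp_eq {n : ℕ} (x y : PhSp n) : symp x y = dot2 y.2 x.1 + dot2 x.2 y.1 := by
  simp [symp, dot2, Finset.sum_add_distrib, mul_comm]

lemma symp_add_left {n : ℕ} (x y z : PhSp n) : symp (x + y) z = symp x z + symp y z := by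
  simp only [symp_eq, Prod.fst_add, Prod.snd_add, dot2_add_left, dot2_add_right]; ring

/-- The phase `i^{a'·b'}` of `W_{(a,b)}`. -/
def ph {n : ℕ} (x : PhSp n) : ℂ := Complex.I ^ (∑ i, (x.1 i).val * (x.2 i).val)

lemma ph_ne {n : ℕ} (x : PhSp n) : ph x ≠ 0 := pow_ne_zero _ Complex.I_ne_zero

lemma ph_sq {n : ℕ} (x : PhSp n) : ph x * ph x = sgn ℂ (dot2 x.2 x.1) := by
  rw [ph, ← mul_pow, Complex.I_mul_I, sgn_natCast]
  simp [dot2, mul_comm]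

lemma star_ph {n : ℕ} (x : PhSp n) : star (ph x) * ph x = 1 := by
  rw [ph, star_pow, ← mul_pow]
  simp

/-! ### The algebra of Weyl operators -/

lemma Weyl_apply {n : ℕ} (x : PhSp n) (j k : QIdx n) :
    Weyl x j k = ph x * sgn ℂ (dot2 x.2 k) * (if j = k + x.1 then 1 else 0) := by
  rw [Weyl, ph, sgn_natCast]
  simp [dot2]

lemma add_self_fun {n : ℕ} (a : QIdx n) : a + a = 0 := by
  ext i; exact CharTwo.add_self_eq_zero _

lemma eq_add_comm' {n : ℕ} (j k a : QIdx n) : j = k + a ↔ k = j + a := by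
  constructor <;> (rintro rfl; rw [add_assoc, add_self_fun, add_zero])

lemma Weyl_mul_apply {n : ℕ} (x y : PhSp n) (j l : QIdx n) :
    (Weyl x * Weyl y) j l = ph x * ph y * sgn ℂ (dot2 x.2 y.1) *
      sgn ℂ (dot2 (x.2 + y.2) l) * (if j = l + (x.1 + y.1) then 1 else 0) := by
  rw [Matrix.mul_apply, Finset.sum_eq_single (l + y.1)]
  · simp only [Weyl_apply, dot2_add_right, dot2_add_left, sgn_add, if_true]
    rw [add_assoc l, add_comm y.1]
    ring
  · intro k _ hk
    simp [Weyl_apply, hk]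
  · simp

lemma Weyl_mul {n : ℕ} (x y : PhSp n) :
    ∃ c : ℂ, c ≠ 0 ∧ Weyl x * Weyl y = c • Weyl (x + y) := by
  have h := sgn_mul_self ℂ (dot2 x.2 y.1)
  refine ⟨ph x * ph y * sgn ℂ (dot2 x.2 y.1) / ph (x + y), ?_, ?_⟩
  · exact div_ne_zero (mul_ne_zero (mul_ne_zero (ph_ne _) (ph_ne _))
      (fun h0 => by simp [h0] at h)) (ph_ne _)
  · ext j l
    rw [Weyl_mul_apply, Matrix.smul_apply, Weyl_apply, smul_eq_mul]
    have := ph_ne (x + y)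
    simp only [Prod.fst_add, Prod.snd_add]
    field_simp

lemma Weyl_comm {n : ℕ} (x y : PhSp n) :
    Weyl x * Weyl y = sgn ℂ (symp x y) • (Weyl y * Weyl x) := by
  ext j l
  rw [Matrix.smul_apply, Weyl_mul_apply, Weyl_mul_apply, symp_eq, sgn_add, smul_eq_mul,
    add_comm y.2, add_comm y.1]
  linear_combination (-(ph x * ph y * sgn ℂ (dot2 x.2 y.1) *
      sgn ℂ (dot2 (x.2 + y.2) l) * (if j = l + (x.1 + y.1) then 1 else 0))) *
      sgn_mul_self ℂ (dot2 y.2 x.1)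

lemma Weyl_sq {n : ℕ} (x : PhSp n) : Weyl x * Weyl x = 1 := by
  ext j l
  rw [Weyl_mul_apply, ph_sq, sgn_mul_self, add_self_fun, add_self_fun, Matrix.one_apply]
  simp [dot2, sgn_zero]

lemma Weyl_herm {n : ℕ} (x : PhSp n) : (Weyl x).conjTranspose = Weyl x := by
  ext j k
  rw [Matrix.conjTranspose_apply, Weyl_apply, Weyl_apply, star_mul', star_mul', star_sgn]
  by_cases h : j = k + x.1
  · have h' := (eq_add_comm' _ _ _).1 h
    rw [if_pos h, if_pos h', star_one, h, dot2_add_right, sgn_add, ← ph_sq]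
    linear_combination (ph x * sgn ℂ (dot2 x.2 k)) * star_ph x
  · rw [if_neg h, if_neg (fun h' => h ((eq_add_comm' _ _ _).1 h'))]
    simp

lemma Weyl_trace {n : ℕ} (x : PhSp n) (hx : x ≠ 0) : (Weyl x).trace = 0 := by
  simp only [Matrix.trace, Matrix.diag_apply, Weyl_apply]
  by_cases ha : x.1 = 0
  · have hb : x.2 ≠ 0 := fun hb => hx (Prod.ext ha hb)
    obtain ⟨i, hi⟩ := Function.ne_iff.1 hb
    have hi : x.2 i = 1 := (zmod2_cases _).resolve_left hi
    have he : dot2 x.2 (Pi.single i 1) = 1 := by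
      simp [dot2, Pi.single_apply, hi]
    -- Translating by the unit vector at a coordinate where `b` is `1` flips the character sum.
    have hs : ∑ k, sgn ℂ (dot2 x.2 k) = 0 := by
      have h1 : ∑ k, sgn ℂ (dot2 x.2 (k + Pi.single i 1)) = ∑ k, sgn ℂ (dot2 x.2 k) :=
        Fintype.sum_equiv (Equiv.addRight (Pi.single i 1)) _ _ (fun k => rfl)
      simp only [dot2_add_right, sgn_add, he, sgn_one, mul_neg, mul_one,
        Finset.sum_neg_distrib] at h1
      linear_combination (-1 / 2 : ℂ) * h1
    simp [ha, ← Finset.mul_sum, hs]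
  · simp [ha]

lemma trace_Weyl_mul {n : ℕ} (x y : PhSp n) :
    (Weyl x * Weyl y).trace = if x = y then 2 ^ n else 0 := by
  split_ifs with h
  · subst h
    rw [Weyl_sq, Matrix.trace_one]
    simp [QIdx]
  · obtain ⟨c, -, hc⟩ := Weyl_mul x y
    rw [hc, Matrix.trace_smul, Weyl_trace, smul_zero]
    intro h0
    apply h
    have h2 : y + y = 0 := Prod.ext (add_self_fun _) (add_self_fun _)
    exact add_right_cancel (h0.trans h2.symm)

/-! ### The unsigned stabilizer set -/

/-- The eigenvalue `s_x = ±1` of `W_x` on `φ`; meaningful for `x ∈ S_φ`. -/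
def eig {n : ℕ} (φ : QIdx n → ℂ) (x : PhSp n) : ℝ :=
  if (Weyl x).mulVec φ = φ then 1 else -1

lemma eig_sq {n : ℕ} (φ : QIdx n → ℂ) (x : PhSp n) : eig φ x ^ 2 = 1 := by
  rw [eig]; split_ifs <;> norm_num

lemma eig_spec {n : ℕ} {φ : QIdx n → ℂ} {x : PhSp n} (hx : x ∈ stabSet φ) :
    (Weyl x).mulVec φ = (eig φ x : ℂ) • φ := by
  rw [stabSet, Finset.mem_filter] at hx
  rw [eig]
  split_ifs with h
  · simp [h]
  · simp [hx.2.resolve_left h]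

/-- Any eigenvalue of `W_x` is a sign since `W_x² = 1`, so every `x` with `φ` as an eigenvector of
`W_x` lies in `S_φ`. -/
lemma mem_stabSet_of_eig {n : ℕ} {φ : QIdx n → ℂ} (hφ : φ ≠ 0) {x : PhSp n} {c : ℂ}
    (h : (Weyl x).mulVec φ = c • φ) : x ∈ stabSet φ := by
  have h2 : (c * c) • φ = (1 : ℂ) • φ := by
    have := congrArg (fun M => M.mulVec φ) (Weyl_sq x)
    simpa [← Matrix.mulVec_mulVec, h, Matrix.mulVec_smul, smul_smul] using this
  have h3 := smul_left_injective ℂ hφ h2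
  rw [stabSet, Finset.mem_filter]
  refine ⟨Finset.mem_univ _, ?_⟩
  rcases mul_self_eq_one_iff.1 h3 with rfl | rfl
  · left; simpa using h
  · right; simpa using h

lemma mulVec_mul_stab {n : ℕ} {φ : QIdx n → ℂ} {x y : PhSp n}
    (hx : x ∈ stabSet φ) (hy : y ∈ stabSet φ) :
    (Weyl x * Weyl y).mulVec φ = ((eig φ x : ℂ) * eig φ y) • φ := by
  rw [← Matrix.mulVec_mulVec, eig_spec hy, Matrix.mulVec_smul, eig_spec hx, smul_smul, mul_comm]

lemma add_mem_stabSet {n : ℕ} {φ : QIdx n → ℂ} (hφ : φ ≠ 0) {x y : PhSp n}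
    (hx : x ∈ stabSet φ) (hy : y ∈ stabSet φ) : x + y ∈ stabSet φ := by
  obtain ⟨c, hc, h⟩ := Weyl_mul x y
  have h1 := mulVec_mul_stab hx hy
  rw [h, Matrix.smul_mulVec] at h1
  apply mem_stabSet_of_eig hφ (c := c⁻¹ * ((eig φ x : ℂ) * eig φ y))
  rw [mul_smul, ← h1, smul_smul, inv_mul_cancel₀ hc, one_smul]

lemma symp_eq_zero {n : ℕ} {φ : QIdx n → ℂ} (hφ : φ ≠ 0) {x y : PhSp n}
    (hx : x ∈ stabSet φ) (hy : y ∈ stabSet φ) : symp x y = 0 := by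
  refine (zmod2_cases _).resolve_right fun h => ?_
  have h1 := congrArg (fun M => M.mulVec φ) (Weyl_comm x y)
  simp only [Matrix.smul_mulVec, mulVec_mul_stab hx hy, mulVec_mul_stab hy hx, h, sgn_one,
    smul_smul] at h1
  have h2 := smul_left_injective ℂ hφ h1
  have h3 : eig φ x * eig φ y = -1 * (eig φ y * eig φ x) := by exact_mod_cast h2
  have h4 : eig φ x * eig φ y = 0 := by linarith
  have := eig_sq φ x
  have := eig_sq φ y
  rcases mul_eq_zero.1 h4 with h | h <;> simp_all

/-! ### Character sums over the stabilizer set -/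

/-- The sum of a character over the subgroup `S_φ` is nonnegative: it vanishes as soon as the
character is nontrivial on `S_φ`. -/
lemma charSum_nonneg {n : ℕ} {φ : QIdx n → ℂ} (hφ : φ ≠ 0) (a : PhSp n) :
    0 ≤ ∑ x ∈ stabSet φ, sgn ℝ (symp x a) := by
  by_cases h : ∃ y ∈ stabSet φ, symp y a = 1
  · obtain ⟨y, hy, hya⟩ := h
    -- Translation by `y` is an involution of `S_φ` that flips the sign of every term.
    have hinv : ∀ x : PhSp n, x + y + y = x := fun x => by
      rw [add_assoc, show y + y = 0 from Prod.ext (add_self_fun _) (add_self_fun _), add_zero]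
    have h1 : ∑ x ∈ stabSet φ, sgn ℝ (symp x a) = ∑ x ∈ stabSet φ, sgn ℝ (symp (x + y) a) :=
      Finset.sum_nbij' (fun x => x + y) (fun x => x + y)
        (fun x hx => add_mem_stabSet hφ hx hy) (fun x hx => add_mem_stabSet hφ hx hy)
        (fun x _ => hinv x) (fun x _ => hinv x) (fun x _ => by rw [hinv])
    simp only [symp_add_left, sgn_add, hya, sgn_one, mul_neg, mul_one,
      Finset.sum_neg_distrib] at h1
    linarith
  · push Not at h
    refine Finset.sum_nonneg fun x hx => ?_
    rw [(zmod2_cases _).resolve_right (h x hx), sgn_zero]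
    exact zero_le_one

lemma sum_qMixed_ge {n : ℕ} (ρ : Matrix (QIdx n) (QIdx n) ℂ) {φ : QIdx n → ℂ} (hφ : φ ≠ 0)
    (hstab : (stabSet φ).card = 2 ^ n) :
    2 ^ n * ∑ a ∈ stabSet φ, pMixed ρ a ^ 2 ≤ ∑ x ∈ stabSet φ, qMixed ρ x := by
  have h1 : ∑ x ∈ stabSet φ, qMixed ρ x =
      ∑ a, (∑ x ∈ stabSet φ, sgn ℝ (symp x a)) * pMixed ρ a ^ 2 := by
    simp only [qMixed, Finset.sum_mul]
    exact Finset.sum_comm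
  rw [h1, Finset.mul_sum]
  refine le_trans (Finset.sum_le_sum fun a ha => ?_) (Finset.sum_le_sum_of_subset_of_nonneg
    (Finset.subset_univ (stabSet φ)) fun a _ _ => mul_nonneg (charSum_nonneg hφ a) (sq_nonneg _))
  rw [Finset.sum_congr rfl (fun x hx => by rw [symp_eq_zero hφ hx ha, sgn_zero])]
  simp [hstab]

/-! ### The stabilizer projector and the fidelity -/

/-- A stabilizer state is the uniform average of its signed stabilizer group. -/
lemma proj_eq {n : ℕ} {φ : QIdx n → ℂ} (hφ : cinner φ φ = 1)
    (hstab : (stabSet φ).card = 2 ^ n) :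
    Matrix.vecMulVec φ (star φ) =
      ((2 : ℂ) ^ n)⁻¹ • ∑ a ∈ stabSet φ, (eig φ a : ℂ) • Weyl a := by
  set V := Matrix.vecMulVec φ (star φ) with hV
  set Q := ∑ a ∈ stabSet φ, (eig φ a : ℂ) • Weyl a with hQ
  have hN : (2 : ℂ) ^ n ≠ 0 := by positivity
  have hdot : star φ ⬝ᵥ φ = 1 := by simpa [cinner, dotProduct] using hφ
  have hVh : V.conjTranspose = V := by simp [hV, Matrix.conjTranspose_vecMulVec]
  have hQh : Q.conjTranspose = Q := by
    simp [hQ, Matrix.conjTranspose_sum, Matrix.conjTranspose_smul, Weyl_herm]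
  have hes : ∀ a, (eig φ a : ℂ) * (eig φ a : ℂ) = 1 := fun a => by
    rw [← sq]; exact_mod_cast eig_sq φ a
  have hVV : (V * V).trace = 1 := by
    rw [hV, Matrix.mul_vecMulVec, Matrix.trace_vecMulVec, Matrix.vecMulVec_mulVec, hdot]
    rw [MulOpposite.op_one, one_smul, dotProduct_comm, hdot]
  have hQφ : Q.mulVec φ = (2 : ℂ) ^ n • φ := by
    rw [hQ, Matrix.sum_mulVec, Finset.sum_congr rfl (g := fun _ => φ), Finset.sum_const, hstab]
    · rw [← Nat.cast_smul_eq_nsmul ℂ]; simp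
    · intro a ha
      rw [Matrix.smul_mulVec, eig_spec ha, smul_smul, hes, one_smul]
  have hQV : (Q * V).trace = 2 ^ n := by
    rw [hV, Matrix.mul_vecMulVec, Matrix.trace_vecMulVec, hQφ, smul_dotProduct,
      dotProduct_comm, hdot]
    simp
  have hQQ : (Q * Q).trace = 2 ^ n * 2 ^ n := by
    have : (Q * Q).trace = ∑ a ∈ stabSet φ, ∑ b ∈ stabSet φ,
        (eig φ a : ℂ) * eig φ b * (Weyl a * Weyl b).trace := by
      simp only [hQ, Finset.sum_mul, Finset.mul_sum, Matrix.trace_sum, Matrix.smul_mul,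
        Matrix.mul_smul, Matrix.trace_smul, smul_eq_mul, mul_assoc]
      rw [Finset.sum_comm]
      refine Finset.sum_congr rfl fun a _ => Finset.sum_congr rfl fun b _ => ?_
      rw [Matrix.trace_mul_comm]; ring
    rw [this, Finset.sum_congr rfl (g := fun _ => (2 : ℂ) ^ n)]
    · simp [hstab]
    · intro a ha
      simp [trace_Weyl_mul, ha, hes]
  have hD : (V - ((2 : ℂ) ^ n)⁻¹ • Q).conjTranspose = V - ((2 : ℂ) ^ n)⁻¹ • Q := by
    rw [Matrix.conjTranspose_sub, Matrix.conjTranspose_smul, hVh, hQh]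
    simp
  have h0 : ((V - ((2 : ℂ) ^ n)⁻¹ • Q).conjTranspose * (V - ((2 : ℂ) ^ n)⁻¹ • Q)).trace = 0 := by
    rw [hD]
    simp only [sub_mul, mul_sub, Matrix.trace_sub, Matrix.smul_mul, Matrix.mul_smul,
      Matrix.trace_smul, Matrix.trace_mul_comm V Q, hVV, hQV, hQQ, smul_eq_mul]
    field_simp
    ring
  exact sub_eq_zero.1 (Matrix.trace_conjTranspose_mul_self_eq_zero_iff.1 h0)

/-- If `φ` is a stabilizer state, its fidelity with `ρ` is the average of the signed Weyl
coefficients of `ρ` over `S_φ`. -/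
lemma fidelity_eq {n : ℕ} (ρ : Matrix (QIdx n) (QIdx n) ℂ) {φ : QIdx n → ℂ}
    (hφ : cinner φ φ = 1) (hstab : (stabSet φ).card = 2 ^ n) {τ : ℝ}
    (hτ : cinner φ (ρ.mulVec φ) = (τ : ℂ)) :
    2 ^ n * τ = ∑ a ∈ stabSet φ, eig φ a * ((Weyl a * ρ).trace).re := by
  have h1 : (Matrix.vecMulVec φ (star φ) * ρ).trace = τ := by
    rw [Matrix.trace_mul_comm, Matrix.mul_vecMulVec, Matrix.trace_vecMulVec, dotProduct_comm, ← hτ]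
    simp [cinner, dotProduct]
  rw [proj_eq hφ hstab, Matrix.smul_mul, Matrix.trace_smul, smul_eq_mul,
    inv_mul_eq_iff_eq_mul₀ (by positivity), Finset.sum_mul, Matrix.trace_sum] at h1
  simp only [Matrix.smul_mul, Matrix.trace_smul, smul_eq_mul] at h1
  have h2 := congrArg Complex.re h1
  rw [Complex.re_sum] at h2
  simp only [Complex.re_ofReal_mul] at h2
  rw [h2, mul_comm _ (τ : ℂ), Complex.re_ofReal_mul, mul_comm τ]
  congr 1
  exact_mod_cast (Complex.ofReal_re ((2 : ℝ) ^ n)).symm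

/-- If `ρ` is a density matrix and `φ` a stabilizer state with `⟨φ, ρ φ⟩ = τ`, then
`Σ_{x ∈ S_φ} q_ρ(x) ≥ τ⁴`. -/
theorem fidelity_q_mixed (n : ℕ) (hn : 1 ≤ n)
    (ρ : Matrix (QIdx n) (QIdx n) ℂ) (hρ : ρ.PosSemidef) (htr : ρ.trace = 1)
    (φ : QIdx n → ℂ) (hφ : cinner φ φ = 1) (hstab : (stabSet φ).card = 2 ^ n)
    (τ : ℝ) (hτ : cinner φ (ρ.mulVec φ) = (τ : ℂ)) :
    τ ^ 4 ≤ ∑ x ∈ stabSet φ, qMixed ρ x := by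
  have hφ0 : φ ≠ 0 := by rintro rfl; simp [cinner] at hφ
  refine le_trans ?_ (sum_qMixed_ge ρ hφ0 hstab)
  have hτ' := fidelity_eq ρ hφ hstab hτ
  have hN : (0 : ℝ) < 2 ^ n := by positivity
  have hcard : ((stabSet φ).card : ℝ) = 2 ^ n := by rw [hstab]; simp
  set t : PhSp n → ℝ := fun a => ((Weyl a * ρ).trace).re with ht
  have hp : ∑ a ∈ stabSet φ, pMixed ρ a ^ 2 =
      (∑ a ∈ stabSet φ, (t a ^ 2) ^ 2) / (2 ^ n) ^ 2 := by
    rw [Finset.sum_div]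
    exact Finset.sum_congr rfl fun a _ => by rw [pMixed, div_pow]
  have c1 := sq_sum_le_card_mul_sum_sq (s := stabSet φ) (f := fun a => eig φ a * t a)
  have c2 := sq_sum_le_card_mul_sum_sq (s := stabSet φ) (f := fun a => t a ^ 2)
  simp only [mul_pow, eig_sq, one_mul] at c1
  rw [← hτ', hcard] at c1
  rw [hcard] at c2
  rw [hp]
  generalize (2 : ℝ) ^ n = N at *
  generalize ∑ a ∈ stabSet φ, (t a ^ 2) ^ 2 = F at *
  generalize ∑ a ∈ stabSet φ, t a ^ 2 = T at *
  have c3 : N * τ ^ 2 ≤ T := by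
    have : N * (N * τ ^ 2) ≤ N * T := by linarith
    exact le_of_mul_le_mul_left this hN
  have c4 : (N * τ ^ 2) ^ 2 ≤ T ^ 2 := pow_le_pow_left₀ (by positivity) c3 2
  have c5 : N * (N * τ ^ 4) ≤ N * F := by nlinarith
  have c6 := le_of_mul_le_mul_left c5 hN
  rw [show N * (F / N ^ 2) = F / N by field_simp, le_div_iff₀ hN]
  linarith
end
end

section
/- Let n ≥ 1, let ρ be a 2^n × 2^n positive semidefinite Hermitian complex matrix with trace 1 (a density matrix), and let x ∈ 𝔽₂^{2n}. Define the Bell difference sampling projector Π_x := 4^{-n} · Σ_{a ∈ 𝔽₂^{2n}} (−1)^{[x,a]} (W_a ⊗ W_a ⊗ W_a ⊗ W_a), where ⊗ is the Kronecker product. Then tr(Π_x · (ρ ⊗ ρ ⊗ ρ ⊗ ρ)) = Σ_{a ∈ 𝔽₂^{2n}} (−1)^{[x,a]} p_ρ(a)², i.e., the probability of outcome x when Bell difference sampling four copies of ρ equals q_ρ(x). -/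
/-! The trace is linear and multiplicative on Kronecker products, so with `t_a = tr(W_a ρ)` the left
side is `4⁻ⁿ Σ_a (−1)^{[x,a]} t_a⁴`. The phase `i^{a'·b'}` makes every Weyl operator Hermitian
(`weyl_isHermitian`), so `t_a` is real (`trace_weyl_mul_re`) and `p_ρ(a)² = (t_a² / 2ⁿ)² = t_a⁴ / 4ⁿ`. -/

open scoped Classical ComplexOrder

noncomputable section

open Kronecker

/-- The Bell difference sampling projector
`Π_x = 4^{-n} Σ_a (−1)^{[x,a]} W_a ⊗ W_a ⊗ W_a ⊗ W_a`. -/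
def BellProj {n : ℕ} (x : PhSp n) :
    Matrix (((QIdx n × QIdx n) × QIdx n) × QIdx n)
      (((QIdx n × QIdx n) × QIdx n) × QIdx n) ℂ :=
  ((4 : ℂ) ^ n)⁻¹ •
    ∑ a : PhSp n, ((-1 : ℂ) ^ (symp x a).val) •
      (Weyl a ⊗ₖ Weyl a ⊗ₖ Weyl a ⊗ₖ Weyl a)

theorem qIdx_add_self {n : ℕ} (v : QIdx n) : v + v = 0 :=
  funext fun i => CharTwo.add_self_eq_zero (v i)

theorem neg_one_pow_val_mul_add (b k a : ZMod 2) :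
    (-1 : ℂ) ^ (b.val * (k + a).val) =
      (-1 : ℂ) ^ (b.val * k.val) * (-1 : ℂ) ^ (a.val * b.val) := by
  have h : ∀ b k a : ZMod 2,
      (b.val * (k + a).val) % 2 = (b.val * k.val + a.val * b.val) % 2 := by decide
  rw [← pow_add, neg_one_pow_eq_pow_mod_two, h, ← neg_one_pow_eq_pow_mod_two]

/-- Conjugation turns `i^{a'·b'}` into `i^{a'·b'} (−1)^{a'·b'}`, and this sign is cancelled by the one
from transposition, `(−1)^{b·(k+a)} = (−1)^{b·k} (−1)^{a·b}`. -/
theorem weyl_isHermitian {n : ℕ} (x : PhSp n) : (Weyl x).IsHermitian := by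
  ext j k
  rw [Matrix.conjTranspose_apply]
  unfold Weyl
  by_cases h : j = k + x.1
  · have h' : k = j + x.1 := by
      rw [h, add_assoc, qIdx_add_self, add_zero]
    rw [if_pos h, if_pos h']
    have hs : (-1 : ℂ) ^ (∑ i, (x.2 i).val * (j i).val) =
        (-1 : ℂ) ^ (∑ i, (x.2 i).val * (k i).val) *
          (-1 : ℂ) ^ (∑ i, (x.1 i).val * (x.2 i).val) := by
      simp only [← Finset.prod_pow_eq_pow_sum, ← Finset.prod_mul_distrib]
      refine Finset.prod_congr rfl fun i _ => ?_
      rw [h, Pi.add_apply, neg_one_pow_val_mul_add]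
    rw [hs]
    simp only [star_mul', star_pow, star_neg, star_one, mul_one, Complex.star_def, Complex.conj_I]
    rw [neg_pow Complex.I]
    have h1 : (-1 : ℂ) ^ (∑ i, (x.1 i).val * (x.2 i).val) *
        (-1 : ℂ) ^ (∑ i, (x.1 i).val * (x.2 i).val) = 1 := by
      rw [← mul_pow]; simp
    linear_combination Complex.I ^ (∑ i, (x.1 i).val * (x.2 i).val) *
      (-1 : ℂ) ^ (∑ i, (x.2 i).val * (k i).val) * h1
  · have h' : ¬ k = j + x.1 := by
      intro h'
      apply h
      rw [h', add_assoc, qIdx_add_self, add_zero]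
    rw [if_neg h, if_neg h']
    simp

theorem trace_weyl_mul_re {n : ℕ} (a : PhSp n) {ρ : Matrix (QIdx n) (QIdx n) ℂ}
    (hρ : ρ.IsHermitian) :
    (((Weyl a * ρ).trace.re : ℝ) : ℂ) = (Weyl a * ρ).trace := by
  rw [← Complex.conj_eq_iff_re, ← Complex.star_def, ← Matrix.trace_conjTranspose,
    Matrix.conjTranspose_mul, hρ.eq, (weyl_isHermitian a).eq, Matrix.trace_mul_comm]

/-- The probability of outcome `x` when Bell difference sampling four copies of the density
matrix `ρ` equals `q_ρ(x)`:  `tr(Π_x (ρ ⊗ ρ ⊗ ρ ⊗ ρ)) = Σ_a (−1)^{[x,a]} p_ρ(a)² = q_ρ(x)`. -/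
theorem bell_sampling_prob (n : ℕ) (hn : 1 ≤ n)
    (ρ : Matrix (QIdx n) (QIdx n) ℂ) (hρ : ρ.PosSemidef) (htr : ρ.trace = 1)
    (x : PhSp n) :
    (BellProj x * (ρ ⊗ₖ ρ ⊗ₖ ρ ⊗ₖ ρ)).trace = ((qMixed ρ x : ℝ) : ℂ) := by
  simp only [BellProj, qMixed, pMixed, Matrix.smul_mul, Matrix.sum_mul, Matrix.trace_smul,
    Matrix.trace_sum, ← Matrix.mul_kronecker_mul, Matrix.trace_kronecker, smul_eq_mul]
  push_cast
  simp only [trace_weyl_mul_re _ hρ.isHermitian]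
  rw [Finset.mul_sum]
  refine Finset.sum_congr rfl fun a _ => ?_
  rw [div_pow, ← pow_mul (2 : ℂ), mul_comm n 2, pow_mul (2 : ℂ), div_eq_mul_inv]
  norm_num
  ring
end
end

section
/- Let N ≥ 1, let p : Fin N → ℝ≥0 be a probability distribution (Σᵢ p(i) = 1), let ε > 0 and 0 < δ < 1, and let m be a natural number with m ≥ 2 log(2/δ) / ε². For m independent samples from p — formally, summing the product ∏_{j=1}^m p(s_j) over all tuples s ∈ (Fin N)^m in the event — the probability that the empirical distribution p̂_s, defined by p̂_s(i) := |{j : s_j = i}| / m, satisfies max_{i ∈ Fin N} |p̂_s(i) − p(i)| > ε is at most δ. -/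
/-!
The constant in the sample size leaves enough room for a concentration argument that never pays a
union bound over the `N` categories. Let `G s = max_i |∑_j (1[s_j = i] - p i)| = m ‖p̂_s - p‖_∞`.

* The mean of `G` is at most `√m`: bounding the maximum by the Euclidean norm,
  `E G² ≤ ∑_i m p_i (1 - p_i) ≤ m` (`expect_dev_sq`, `expect_dev`).
* `G` changes by at most `1` when one sample changes (`dev_update`), so McDiarmid's inequality, in
  the exponential-moment form `expect_exp_le`, gives `E exp (t (G - E G)) ≤ exp (m t² / 8)`.
  That bound is an induction on the number of samples whose step is Hoeffding's lemma.

With `x = ε √m`, Markov's inequality yields `P(G > m ε) ≤ exp (-2 (x - 1)²)` whenever `x ≥ 1`.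
Since `2 (x - 1)² - x² / 2 + 2 / 3 = (3 / 2) (x - 4 / 3)² ≥ 0` and `log 2 > 2 / 3`, this is at most
`2 exp (-x² / 2)`, and `x² ≥ 2 log (2 / δ)` turns the latter into `δ`.
-/

open scoped Classical

noncomputable section

/-- The expectation of `f` over `m` independent samples from the weights `p`. -/
def expect {N : ℕ} (p : Fin N → ℝ) (m : ℕ) (f : (Fin m → Fin N) → ℝ) : ℝ :=
  ∑ s, (∏ j, p (s j)) * f s

lemma expect_succ {N : ℕ} (p : Fin N → ℝ) (m : ℕ) (f : (Fin (m + 1) → Fin N) → ℝ) :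
    expect p (m + 1) f = ∑ a, p a * expect p m (fun s => f (Fin.cons a s)) := by
  unfold expect
  rw [← (Fin.consEquiv (fun _ => Fin N)).sum_comp, Fintype.sum_prod_type]
  simp [Fin.prod_univ_succ, Finset.mul_sum, mul_assoc, Fin.consEquiv]

lemma expect_mono {N : ℕ} {p : Fin N → ℝ} (hp0 : ∀ i, 0 ≤ p i) {m : ℕ}
    {f g : (Fin m → Fin N) → ℝ} (h : ∀ s, f s ≤ g s) : expect p m f ≤ expect p m g :=
  Finset.sum_le_sum fun s _ =>
    mul_le_mul_of_nonneg_left (h s) (Finset.prod_nonneg fun _ _ => hp0 _)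

lemma expect_add {N : ℕ} (p : Fin N → ℝ) (m : ℕ) (f g : (Fin m → Fin N) → ℝ) :
    expect p m (fun s => f s + g s) = expect p m f + expect p m g := by
  simp [expect, mul_add, Finset.sum_add_distrib]

lemma expect_mul {N : ℕ} (p : Fin N → ℝ) (m : ℕ) (c : ℝ) (f : (Fin m → Fin N) → ℝ) :
    expect p m (fun s => c * f s) = c * expect p m f := by
  simp only [expect, Finset.mul_sum]
  exact Finset.sum_congr rfl fun s _ => by ring

lemma expect_sum {N : ℕ} {ι : Type*} [Fintype ι] (p : Fin N → ℝ) (m : ℕ)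
    (f : ι → (Fin m → Fin N) → ℝ) :
    expect p m (fun s => ∑ i, f i s) = ∑ i, expect p m (f i) := by
  simp only [expect, Finset.mul_sum]
  exact Finset.sum_comm

lemma expect_const {N : ℕ} {p : Fin N → ℝ} (hp1 : ∑ i, p i = 1) (m : ℕ) (c : ℝ) :
    expect p m (fun _ => c) = c := by
  induction m with
  | zero => simp [expect]
  | succ m ih => rw [expect_succ]; simp [ih, ← Finset.sum_mul, hp1]

/-- Hoeffding's lemma for a finite distribution and a function of oscillation at most `1`. -/
lemma hoeffding_fin {N : ℕ} {p : Fin N → ℝ} (hp0 : ∀ i, 0 ≤ p i) (hp1 : ∑ i, p i = 1)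
    (X : Fin N → ℝ) (hX : ∀ a b, X a ≤ X b + 1) (t : ℝ) :
    ∑ a, p a * Real.exp (t * (X a - ∑ b, p b * X b)) ≤ Real.exp (t ^ 2 / 8) := by
  have hne : Nonempty (Fin N) := by
    by_contra h
    rw [not_nonempty_iff] at h
    simp at hp1
  obtain ⟨b, hb⟩ := Finite.exists_min X
  let P : PMF (Fin N) := PMF.ofFintype (fun a => ENNReal.ofReal (p a)) (by
    rw [← ENNReal.ofReal_sum_of_nonneg fun i _ => hp0 i, hp1, ENNReal.ofReal_one])
  have hint : ∀ f : Fin N → ℝ, ∫ a, f a ∂P.toMeasure = ∑ a, p a * f a := by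
    intro f
    rw [PMF.integral_eq_sum]
    simp [P, ENNReal.toReal_ofReal (hp0 _)]
  have h := (ProbabilityTheory.hasSubgaussianMGF_of_mem_Icc (μ := P.toMeasure) (X := X)
    (a := X b) (b := X b + 1) (measurable_of_finite X).aemeasurable
    (Filter.Eventually.of_forall fun a => ⟨hb a, hX a b⟩)).mgf_le t
  rw [ProbabilityTheory.mgf, hint, hint] at h
  refine h.trans_eq ?_
  congr 1
  simp
  ring

/-- The exponential-moment form of McDiarmid's inequality, for a function that changes by at most
`1` when one of its arguments is changed. -/
lemma expect_exp_le {N : ℕ} {p : Fin N → ℝ} (hp0 : ∀ i, 0 ≤ p i) (hp1 : ∑ i, p i = 1)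
    (t : ℝ) (m : ℕ) (f : (Fin m → Fin N) → ℝ)
    (hf : ∀ s j a, f (Function.update s j a) ≤ f s + 1) :
    expect p m (fun s => Real.exp (t * (f s - expect p m f))) ≤ Real.exp (m * t ^ 2 / 8) := by
  induction m with
  | zero => simp [expect]
  | succ m ih =>
    -- `g a` is the mean of `f` conditional on the first sample being `a`.
    set g : Fin N → ℝ := fun a => expect p m (fun s => f (Fin.cons a s)) with hg
    have hmean : expect p (m + 1) f = ∑ a, p a * g a := expect_succ p m f
    have hosc : ∀ a b, g a ≤ g b + 1 := by
      intro a b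
      rw [hg, ← expect_const hp1 m 1, ← expect_add]
      refine expect_mono hp0 fun s => ?_
      have := hf (Fin.cons b s) 0 a
      rwa [Fin.update_cons_zero] at this
    have hstep : ∀ a, expect p m (fun s => Real.exp (t * (f (Fin.cons a s) - g a)))
        ≤ Real.exp (m * t ^ 2 / 8) := by
      intro a
      refine ih (fun s => f (Fin.cons a s)) fun s j b => ?_
      have := hf (Fin.cons a s) j.succ b
      rwa [← Fin.cons_update] at this
    rw [hmean, expect_succ]
    calc
      _ = ∑ a, p a * Real.exp (t * (g a - ∑ b, p b * g b)) *
            expect p m (fun s => Real.exp (t * (f (Fin.cons a s) - g a))) := by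
          refine Finset.sum_congr rfl fun a _ => ?_
          rw [mul_assoc, ← expect_mul p m (Real.exp _)]
          congr 2
          funext s
          rw [← Real.exp_add]
          ring_nf
      _ ≤ ∑ a, p a * Real.exp (t * (g a - ∑ b, p b * g b)) * Real.exp (m * t ^ 2 / 8) :=
          Finset.sum_le_sum fun a _ => mul_le_mul_of_nonneg_left (hstep a)
            (mul_nonneg (hp0 a) (Real.exp_pos _).le)
      _ ≤ Real.exp (t ^ 2 / 8) * Real.exp (m * t ^ 2 / 8) := by
          rw [← Finset.sum_mul]
          exact mul_le_mul_of_nonneg_right (hoeffding_fin hp0 hp1 g hosc t) (Real.exp_pos _).le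
      _ = _ := by
          rw [← Real.exp_add]
          push_cast
          ring_nf

lemma expect_centered_sum {N : ℕ} {p : Fin N → ℝ} (hp1 : ∑ i, p i = 1)
    (h : Fin N → ℝ) (h0 : ∑ a, p a * h a = 0) (m : ℕ) :
    expect p m (fun s => ∑ j, h (s j)) = 0 := by
  induction m with
  | zero => simp [expect]
  | succ m ih =>
    rw [expect_succ]
    simp [Fin.sum_univ_succ, expect_add, expect_const hp1, ih, h0]

/-- Independent centered variables: the variance of the sum is the sum of the variances. -/
lemma expect_centered_sum_sq {N : ℕ} {p : Fin N → ℝ} (hp1 : ∑ i, p i = 1)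
    (h : Fin N → ℝ) (h0 : ∑ a, p a * h a = 0) (m : ℕ) :
    expect p m (fun s => (∑ j, h (s j)) ^ 2) = m * ∑ a, p a * h a ^ 2 := by
  induction m with
  | zero => simp [expect]
  | succ m ih =>
    rw [expect_succ]
    simp [Fin.sum_univ_succ, add_sq, expect_add, expect_const hp1, expect_mul, ih,
      expect_centered_sum hp1 h h0, mul_add, Finset.sum_add_distrib, ← Finset.sum_mul, hp1]
    ring

/-- `m` times the `ℓ∞` distance between the empirical distribution of `s` and `p`; the norm on
`Fin N → ℝ` is the sup norm. -/
def dev {N : ℕ} (p : Fin N → ℝ) {m : ℕ} (s : Fin m → Fin N) : ℝ :=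
  ‖fun i => ∑ j, ((if s j = i then 1 else 0) - p i)‖

lemma dev_update {N : ℕ} (p : Fin N → ℝ) {m : ℕ} (s : Fin m → Fin N) (j : Fin m) (a : Fin N) :
    dev p (Function.update s j a) ≤ dev p s + 1 := by
  unfold dev
  refine (norm_le_norm_add_norm_sub' _ _).trans (add_le_add le_rfl ?_)
  refine (pi_norm_le_iff_of_nonneg zero_le_one).2 fun i => ?_
  rw [Pi.sub_apply, ← Finset.sum_sub_distrib, Finset.sum_eq_single j]
  · simp only [Function.update_self, sub_sub_sub_cancel_right]
    split_ifs <;> simp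
  · intro k _ hk
    simp [Function.update_of_ne hk]
  · simp

lemma expect_dev_sq {N : ℕ} {p : Fin N → ℝ} (hp0 : ∀ i, 0 ≤ p i) (hp1 : ∑ i, p i = 1) (m : ℕ) :
    expect p m (fun s => dev p s ^ 2) ≤ m := by
  set h : Fin N → Fin N → ℝ := fun i a => (if a = i then 1 else 0) - p i with hh
  have h0 : ∀ i, ∑ a, p a * h i a = 0 := by
    intro i
    simp [hh, mul_sub, Finset.sum_sub_distrib, ← Finset.sum_mul, hp1]
  have h2 : ∀ i, ∑ a, p a * h i a ^ 2 ≤ p i := by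
    intro i
    have e : ∀ a, p a * h i a ^ 2 = (1 - 2 * p i) * (p a * if a = i then 1 else 0)
        + p i ^ 2 * p a := by
      intro a
      simp only [hh]
      split_ifs <;> ring
    simp only [e, Finset.sum_add_distrib, ← Finset.mul_sum, hp1]
    simp
    nlinarith [sq_nonneg (p i)]
  calc
    _ ≤ expect p m (fun s => ∑ i, (∑ j, h i (s j)) ^ 2) := by
        refine expect_mono hp0 fun s => ?_
        have hs : 0 ≤ ∑ i, (∑ j, h i (s j)) ^ 2 := Finset.sum_nonneg fun _ _ => sq_nonneg _
        rw [dev, ← Real.le_sqrt (norm_nonneg _) hs]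
        refine (pi_norm_le_iff_of_nonneg (Real.sqrt_nonneg _)).2 fun i => ?_
        rw [Real.norm_eq_abs]
        refine Real.abs_le_sqrt ?_
        exact Finset.single_le_sum (f := fun i => (∑ j, h i (s j)) ^ 2)
          (fun _ _ => sq_nonneg _) (Finset.mem_univ i)
    _ = ∑ i, m * ∑ a, p a * h i a ^ 2 := by
        rw [expect_sum]
        exact Finset.sum_congr rfl fun i _ => expect_centered_sum_sq hp1 (h i) (h0 i) m
    _ ≤ ∑ i, m * p i := Finset.sum_le_sum fun i _ =>
        mul_le_mul_of_nonneg_left (h2 i) (Nat.cast_nonneg m)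
    _ = m := by rw [← Finset.mul_sum, hp1, mul_one]

lemma expect_dev {N : ℕ} {p : Fin N → ℝ} (hp0 : ∀ i, 0 ≤ p i) (hp1 : ∑ i, p i = 1) {m : ℕ}
    (hm : 0 < m) : expect p m (dev p) ≤ √m := by
  have hr : 0 < √(m : ℝ) := Real.sqrt_pos.2 (by exact_mod_cast hm)
  have hr2 : √(m : ℝ) ^ 2 = m := Real.sq_sqrt (Nat.cast_nonneg m)
  -- `2 √m G ≤ G² + m` pointwise; taking expectations replaces the Cauchy-Schwarz inequality.
  have h : expect p m (fun s => 2 * √m * dev p s) ≤ expect p m (fun s => dev p s ^ 2 + m) :=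
    expect_mono hp0 fun s => by nlinarith [sq_nonneg (dev p s - √m)]
  rw [expect_mul, expect_add, expect_const hp1] at h
  nlinarith [expect_dev_sq hp0 hp1 m]

lemma lt_dev_of_exists {N : ℕ} (p : Fin N → ℝ) {m : ℕ} (hm : 0 < m) (s : Fin m → Fin N) {ε : ℝ}
    (h : ∃ i, ε < |((Finset.univ.filter (fun j => s j = i)).card : ℝ) / m - p i|) :
    m * ε < dev p s := by
  obtain ⟨i, hi⟩ := h
  have hm' : (0 : ℝ) < m := by exact_mod_cast hm
  refine lt_of_lt_of_le (mul_lt_mul_of_pos_left hi hm') ?_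
  refine le_trans (le_of_eq ?_)
    (norm_le_pi_norm (fun i => ∑ j, ((if s j = i then (1 : ℝ) else 0) - p i)) i)
  rw [Real.norm_eq_abs, ← abs_of_pos hm', ← abs_mul, abs_of_pos hm', mul_sub,
    mul_div_cancel₀ _ hm'.ne']
  simp [Finset.sum_sub_distrib]

/-- ℓ∞ estimation of a categorical distribution: with `m ≥ 2 log(2/δ)/ε²` i.i.d. samples
from a distribution `p` on `Fin N`, the probability that the empirical distribution deviates
from `p` by more than `ε` in ℓ∞ distance is at most `δ`. -/
theorem linf_estimation (N : ℕ) (hN : 1 ≤ N)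
    (p : Fin N → ℝ) (hp0 : ∀ i, 0 ≤ p i) (hp1 : ∑ i, p i = 1)
    (ε : ℝ) (hε : 0 < ε) (δ : ℝ) (hδ0 : 0 < δ) (hδ1 : δ < 1)
    (m : ℕ) (hm : 2 * Real.log (2 / δ) / ε ^ 2 ≤ (m : ℝ)) :
    (∑ s : Fin m → Fin N,
        if ∃ i, ε < |((Finset.univ.filter (fun j => s j = i)).card : ℝ) / m - p i|
        then ∏ j, p (s j) else 0) ≤ δ := by
  have hlog : Real.log (2 / δ) = Real.log 2 - Real.log δ := Real.log_div two_ne_zero hδ0.ne'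
  have hlogδ : Real.log δ < 0 := Real.log_neg hδ0 hδ1
  have hlog2 := Real.log_two_gt_d9
  rw [div_le_iff₀ (by positivity), hlog] at hm
  have hm0 : 0 < m := by
    rcases Nat.eq_zero_or_pos m with rfl | h
    · norm_num at hm
      linarith
    · exact h
  set r : ℝ := √(m : ℝ) with hr
  have hr0 : 0 < r := Real.sqrt_pos.2 (by exact_mod_cast hm0)
  have hr2 : r ^ 2 = m := Real.sq_sqrt (Nat.cast_nonneg m)
  have hx1 : 1 ≤ r * ε := by
    have : 0 < r * ε := by positivity
    nlinarith
  -- The minimizer over `t` of the exponent `-t (m ε - √m) + m t² / 8`.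
  set t : ℝ := 4 * (r * ε - 1) / r with ht
  have htr : t * r = 4 * (r * ε - 1) := div_mul_cancel₀ _ hr0.ne'
  have ht0 : 0 ≤ t := div_nonneg (by linarith) hr0.le
  set μ := expect p m (dev p) with hμ
  have hμr : μ ≤ r := expect_dev hp0 hp1 hm0
  calc
    _ ≤ expect p m (fun s => Real.exp (t * (μ - m * ε)) * Real.exp (t * (dev p s - μ))) := by
        refine Finset.sum_le_sum fun s _ => ?_
        have hw : 0 ≤ ∏ j, p (s j) := Finset.prod_nonneg fun _ _ => hp0 _
        simp only [← Real.exp_add]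
        split_ifs with h
        · refine le_mul_of_one_le_right hw (Real.one_le_exp ?_)
          have := lt_dev_of_exists p hm0 s h
          nlinarith
        · positivity
    _ ≤ Real.exp (t * (μ - m * ε)) * Real.exp (m * t ^ 2 / 8) := by
        rw [expect_mul]
        exact mul_le_mul_of_nonneg_left
          (expect_exp_le hp0 hp1 t m (dev p) (dev_update p)) (Real.exp_pos _).le
    _ ≤ Real.exp (Real.log δ) := by
        rw [← Real.exp_add]
        refine Real.exp_le_exp.2 ?_
        have h1 : t * μ ≤ t * r := mul_le_mul_of_nonneg_left hμr ht0
        have h2 : t * (m * ε) = t * r * (r * ε) := by rw [← hr2]; ring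
        have h3 : (m : ℝ) * t ^ 2 = (t * r) ^ 2 := by rw [← hr2]; ring
        have h4 : (m : ℝ) * ε ^ 2 = (r * ε) ^ 2 := by rw [← hr2]; ring
        rw [mul_sub, h2, h3]
        rw [h4] at hm
        rw [htr] at h1 ⊢
        nlinarith [sq_nonneg (r * ε - 4 / 3)]
    _ = δ := Real.exp_log hδ0
end
end

section
/- Let N be a natural number and P ∈ [0,1]. If X is a binomial random variable with N trials and success probability P, then Pr[X ≥ ⌊N·P⌋] ≥ 1/2; equivalently, Σ_{i = ⌊N·P⌋}^{N} (N choose i) · P^i · (1−P)^{N−i} ≥ 1/2. -/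
noncomputable section

/-!
Write `T n j y` (`binTail`) for the probability that a binomial variable with `n` trials and
success probability `y` is at least `j`. Since `T n k` is nondecreasing in `y`, it suffices to
bound `W k l = T (k + l) k (k / (k + l))`, the case where the mean is the integer `k`.

The function `W` is nonincreasing in `k` and in `l` (for `k ≥ 1`), so `W k l ≥ W m m` with
`m = max k l`, and `W m m ≥ 1/2` by the symmetry of the binomial law with parameter `1/2`.

Both monotonicity statements come from one interpolating function. For real `c`, put
`H y = T n (l+1) y + C(n,l) (c - n y) y^l (1-y)^(n-l)`. Pascal's rule and
`c - n c/(n+1) = c/(n+1)` give `H (c/n) = T n (l+1) (c/n)` and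
`H (c/(n+1)) = T (n+1) (l+1) (c/(n+1))`, so the two tails can be compared through the sign of
`H'` on the interval from `c/(n+1)` to `c/n`. Up to a nonnegative factor, `H'` equals
`(n-l) y - n y (1-y) + (c - n y) (l - n y)`, which factors as `(n y - l) ((n+1) y - (l+1))` for
`c = l + 1` (monotonicity in the number of failures) and as `-(l - n y) ((n+1) y - l)` for
`c = l` (monotonicity in the number of successes, after exchanging successes and failures).
-/

/-- The upper tail `Pr[X ≥ j]` of a binomial variable `X` with `n` trials and parameter `y`, as a
polynomial in the real variable `y`. -/
def binTail (n j : ℕ) (y : ℝ) : ℝ :=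
  ∑ i ∈ Finset.Icc j n, (n.choose i : ℝ) * y ^ i * (1 - y) ^ (n - i)

lemma binTail_eq_add {n j : ℕ} (h : j ≤ n) (y : ℝ) :
    binTail n j y = (n.choose j : ℝ) * y ^ j * (1 - y) ^ (n - j) + binTail n (j + 1) y := by
  unfold binTail
  rw [← Finset.insert_Icc_add_one_left_eq_Icc h, Finset.sum_insert (by simp)]

lemma binTail_zero (n : ℕ) (y : ℝ) : binTail n 0 y = 1 := by
  have h := add_pow y (1 - y) n
  rw [add_sub_cancel, one_pow, Finset.range_eq_Ico] at h
  rw [h, binTail]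
  refine Finset.sum_congr (by ext; simp) fun i _ => by ring

lemma binTail_of_lt {n j : ℕ} (h : n < j) (y : ℝ) : binTail n j y = 0 := by
  simp [binTail, Finset.Icc_eq_empty_of_lt h]

/-- `Pr[X ≥ k] + Pr[n - X ≥ l + 1] = 1` for `n = k + l`. -/
lemma binTail_add_compl (k l : ℕ) (y : ℝ) :
    binTail (k + l) k y + binTail (k + l) (l + 1) (1 - y) = 1 := by
  suffices h : ∀ n k l : ℕ, k + l = n → binTail n k y + binTail n (l + 1) (1 - y) = 1 from
    h _ k l rfl
  intro n k
  induction k with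
  | zero =>
    intro l h
    rw [binTail_zero, binTail_of_lt (by omega), add_zero]
  | succ k ih =>
    intro l h
    have h0 := ih (l + 1) (by omega)
    rw [binTail_eq_add (by omega : k ≤ n)] at h0
    rw [binTail_eq_add (by omega : l + 1 ≤ n)]
    have e : n.choose (l + 1) = n.choose k :=
      Nat.choose_symm_of_eq_add (by omega)
    have e1 : n - k = l + 1 := by omega
    have e2 : n - (l + 1) = k := by omega
    rw [e1] at h0
    rw [e, e2, sub_sub_cancel]
    linarith

/-- Pascal's rule for tails: the last trial matters only if the first `n` give exactly `l`
successes. -/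
lemma binTail_succ (n l : ℕ) (h : l ≤ n) (y : ℝ) :
    binTail (n + 1) (l + 1) y =
      binTail n (l + 1) y + (n.choose l : ℝ) * y ^ (l + 1) * (1 - y) ^ (n - l) := by
  induction h using Nat.decreasingInduction with
  | self =>
    rw [binTail_of_lt (Nat.lt_succ_self n)]
    simp [binTail]
  | of_succ l h ih =>
    rw [binTail_eq_add (by omega : l + 1 ≤ n + 1), ih, binTail_eq_add (by omega : l + 1 ≤ n),
      Nat.choose_succ_succ]
    obtain ⟨r, rfl⟩ := Nat.exists_eq_add_of_le (Nat.succ_le_of_lt h)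
    have e1 : l.succ + r + 1 - (l + 1) = r + 1 := by omega
    have e2 : l.succ + r - (l + 1) = r := by omega
    have e3 : l.succ + r - l = r + 1 := by omega
    rw [e1, e2, e3]
    push_cast
    ring

/-- The derivative of the tail telescopes to the density of a Beta law. -/
lemma hasDerivAt_binTail (n l : ℕ) (h : l ≤ n) (y : ℝ) :
    HasDerivAt (binTail n (l + 1))
      ((n.choose l : ℝ) * (n - l : ℕ) * y ^ l * (1 - y) ^ (n - l - 1)) y := by
  induction h using Nat.decreasingInduction with
  | self =>
    have : binTail n (n + 1) = fun _ => 0 := funext fun z => binTail_of_lt (Nat.lt_succ_self n) z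
    rw [this]
    simpa using hasDerivAt_const y (0 : ℝ)
  | of_succ l h ih =>
    have hf : binTail n (l + 1) = fun z => (n.choose (l + 1) : ℝ) * z ^ (l + 1) *
        (1 - z) ^ (n - (l + 1)) + binTail n (l + 1 + 1) z :=
      funext fun z => binTail_eq_add (by omega) z
    rw [hf]
    have hd := ((((hasDerivAt_id y).pow (l + 1)).const_mul (n.choose (l + 1) : ℝ)).mul
      (((hasDerivAt_id y).const_sub 1).pow (n - (l + 1)))).add ih
    refine hd.congr_deriv ?_
    have hc : (n.choose (l + 1) : ℝ) * (l + 1) = n.choose l * (n - l : ℕ) := by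
      exact_mod_cast Nat.choose_succ_right_eq n l
    have e1 : n - l - 1 = n - (l + 1) := by omega
    rw [← hc, e1]
    simp only [id, Pi.pow_apply, Nat.add_sub_cancel]
    push_cast
    ring

lemma binTail_monotoneOn (n l : ℕ) (h : l ≤ n) :
    MonotoneOn (binTail n (l + 1)) (Set.Icc 0 1) := by
  refine monotoneOn_of_deriv_nonneg (convex_Icc 0 1)
    (fun y _ => (hasDerivAt_binTail n l h y).continuousAt.continuousWithinAt)
    (fun y _ => (hasDerivAt_binTail n l h y).differentiableAt.differentiableWithinAt) ?_
  intro y hy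
  rw [interior_Icc] at hy
  rw [(hasDerivAt_binTail n l h y).deriv]
  have h0 := hy.1.le
  have h1 : 0 ≤ 1 - y := by linarith [hy.2]
  positivity

/-- Interpolates between `binTail n (l + 1)` at `c / n` and `binTail (n + 1) (l + 1)` at
`c / (n + 1)`. -/
def binInterp (n l : ℕ) (c y : ℝ) : ℝ :=
  binTail n (l + 1) y + (n.choose l : ℝ) * ((c - n * y) * (y ^ l * (1 - y) ^ (n - l)))

lemma binInterp_left (n l : ℕ) (h : l ≤ n) (c : ℝ) :
    binInterp n l c (c / (n + 1)) = binTail (n + 1) (l + 1) (c / (n + 1)) := by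
  have e : c - n * (c / (n + 1)) = c / (n + 1) := by
    have : (n : ℝ) + 1 ≠ 0 := by positivity
    field_simp
    ring
  rw [binInterp, binTail_succ n l h, e]
  ring

lemma binInterp_right (n l : ℕ) (hn : n ≠ 0) (c : ℝ) :
    binInterp n l c (c / n) = binTail n (l + 1) (c / n) := by
  have e : c - n * (c / n) = 0 := by
    have : (n : ℝ) ≠ 0 := by exact_mod_cast hn
    field_simp
    ring
  rw [binInterp, e]
  ring

/-- The derivative is multiplied by `y` to avoid the exponent `l - 1`, which is truncated at
`l = 0`. -/
lemma hasDerivAt_binInterp (n l : ℕ) (h : l < n) (c y : ℝ) :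
    ∃ d, HasDerivAt (binInterp n l c) d y ∧
      y * d = (n.choose l : ℝ) * y ^ l * (1 - y) ^ (n - l - 1) *
        ((n - l) * y - n * y * (1 - y) + (c - n * y) * (l - n * y)) := by
  have hd := (hasDerivAt_binTail n l h.le y).add
    (((((hasDerivAt_id y).const_mul (n : ℝ)).const_sub c).mul
      (((hasDerivAt_id y).pow l).mul
        (((hasDerivAt_id y).const_sub 1).pow (n - l)))).const_mul (n.choose l : ℝ))
  refine ⟨_, hd, ?_⟩
  obtain ⟨r, rfl⟩ := Nat.exists_eq_add_of_lt h
  have e1 : l + r + 1 - l = r + 1 := by omega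
  simp only [e1, id, Pi.pow_apply, Pi.mul_apply, Nat.add_sub_cancel]
  have e2 : y * ((l : ℝ) * y ^ (l - 1)) = l * y ^ l := by
    cases l with
    | zero => simp
    | succ l => rw [Nat.add_sub_cancel]; ring
  push_cast
  linear_combination ((l + r + 1).choose l : ℝ) * (c - (l + r + 1) * y) * (1 - y) ^ (r + 1) * e2

/-- Adding a trial while keeping the mean equal to `l + 1` decreases `Pr[X ≥ l + 1]`. -/
lemma binTail_succ_le (n l : ℕ) (h : l < n) :
    binTail (n + 1) (l + 1) ((l + 1 : ℝ) / (n + 1)) ≤ binTail n (l + 1) ((l + 1 : ℝ) / n) := by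
  have hn : (0 : ℝ) < n := by exact_mod_cast (by omega : 0 < n)
  have hl : (l : ℝ) + 1 ≤ n := by exact_mod_cast h
  rw [← binInterp_left n l h.le, ← binInterp_right n l (by omega)]
  choose d hd hd' using hasDerivAt_binInterp n l h (l + 1)
  have hle : (l + 1 : ℝ) / (n + 1) ≤ (l + 1 : ℝ) / n := by gcongr; linarith
  refine monotoneOn_of_deriv_nonneg (convex_Icc ((l + 1 : ℝ) / (n + 1)) ((l + 1 : ℝ) / n))
    (fun y _ => (hd y).continuousAt.continuousWithinAt)
    (fun y _ => (hd y).differentiableAt.differentiableWithinAt) ?_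
    (Set.left_mem_Icc.2 hle) (Set.right_mem_Icc.2 hle) hle
  intro y hy
  rw [interior_Icc] at hy
  obtain ⟨h1, h2⟩ := hy
  have hy0 : 0 < y := lt_trans (by positivity) h1
  rw [div_lt_iff₀ (by positivity)] at h1
  rw [lt_div_iff₀ hn] at h2
  have hy1 : 0 ≤ 1 - y := by nlinarith
  rw [(hd y).deriv]
  by_contra! hneg
  have e := hd' y
  have : 0 ≤ (n.choose l : ℝ) * y ^ l * (1 - y) ^ (n - l - 1) *
      ((n * y - l) * ((n + 1) * y - (l + 1))) :=
    mul_nonneg (by positivity) (mul_nonneg (by nlinarith) (by linarith))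
  nlinarith [mul_neg_of_pos_of_neg hy0 hneg]

/-- Adding a trial while keeping the mean equal to `l` increases `Pr[X ≥ l + 1]`. -/
lemma binTail_le_succ (n l : ℕ) (h : l < n) :
    binTail n (l + 1) ((l : ℝ) / n) ≤ binTail (n + 1) (l + 1) ((l : ℝ) / (n + 1)) := by
  have hn : (0 : ℝ) < n := by exact_mod_cast (by omega : 0 < n)
  have hl : (l : ℝ) + 1 ≤ n := by exact_mod_cast h
  rw [← binInterp_left n l h.le, ← binInterp_right n l (by omega)]
  choose d hd hd' using hasDerivAt_binInterp n l h l
  have hle : (l : ℝ) / (n + 1) ≤ (l : ℝ) / n := by gcongr; linarith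
  refine antitoneOn_of_deriv_nonpos (convex_Icc ((l : ℝ) / (n + 1)) ((l : ℝ) / n))
    (fun y _ => (hd y).continuousAt.continuousWithinAt)
    (fun y _ => (hd y).differentiableAt.differentiableWithinAt) ?_
    (Set.left_mem_Icc.2 hle) (Set.right_mem_Icc.2 hle) hle
  intro y hy
  rw [interior_Icc] at hy
  obtain ⟨h1, h2⟩ := hy
  have hy0 : 0 < y := lt_of_le_of_lt (by positivity) h1
  rw [div_lt_iff₀ (by positivity)] at h1
  rw [lt_div_iff₀ hn] at h2
  have hy1 : 0 ≤ 1 - y := by nlinarith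
  rw [(hd y).deriv]
  by_contra! hpos
  have e := hd' y
  have : 0 ≤ (n.choose l : ℝ) * y ^ l * (1 - y) ^ (n - l - 1) * ((l - n * y) * ((n + 1) * y - l)) :=
    mul_nonneg (by positivity) (mul_nonneg (by linarith) (by linarith))
  nlinarith [mul_pos hy0 hpos]

/-- The tail `Pr[X ≥ k]` of a binomial variable with `k + l` trials and mean exactly `k`. -/
def meanTail (k l : ℕ) : ℝ := binTail (k + l) k ((k : ℝ) / (k + l))

lemma meanTail_eq_compl (k l : ℕ) (hk : 1 ≤ k) :
    meanTail k l = 1 - binTail (k + l) (l + 1) ((l : ℝ) / (k + l)) := by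
  have h := binTail_add_compl k l ((k : ℝ) / (k + l))
  have hk' : (0 : ℝ) < k := by exact_mod_cast hk
  have e : 1 - (k : ℝ) / (k + l) = l / (k + l) := by
    field_simp
    ring
  rw [e] at h
  rw [meanTail]
  linarith

lemma meanTail_succ_right (k l : ℕ) (hk : 1 ≤ k) : meanTail k (l + 1) ≤ meanTail k l := by
  obtain ⟨k, rfl⟩ := Nat.exists_eq_add_of_le' hk
  have h := binTail_succ_le (k + 1 + l) k (by omega)
  unfold meanTail
  push_cast at h ⊢
  rw [← add_assoc, ← add_assoc]
  exact h

lemma meanTail_succ_left (k l : ℕ) (hk : 1 ≤ k) : meanTail (k + 1) l ≤ meanTail k l := by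
  have h := binTail_le_succ (k + l) l (by omega)
  rw [meanTail_eq_compl k l hk, meanTail_eq_compl (k + 1) l (by omega)]
  push_cast at h ⊢
  rw [add_right_comm k 1 l, add_right_comm (k : ℝ) 1 l]
  linarith

lemma half_le_meanTail_self (k : ℕ) (hk : 1 ≤ k) : 1 / 2 ≤ meanTail k k := by
  have h := meanTail_eq_compl k k hk
  have h' : meanTail k k = _ := binTail_eq_add (Nat.le_add_right k k) _
  have hk' : (0 : ℝ) < k := by exact_mod_cast hk
  have e : 1 - (k : ℝ) / (k + k) = k / (k + k) := by
    field_simp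
    ring
  rw [e] at h'
  have : 0 ≤ ((k + k).choose k : ℝ) * ((k : ℝ) / (k + k)) ^ k *
      ((k : ℝ) / (k + k)) ^ (k + k - k) := by positivity
  linarith

lemma half_le_meanTail (k l : ℕ) (hk : 1 ≤ k) : 1 / 2 ≤ meanTail k l := by
  rcases le_total k l with h | h
  · refine (half_le_meanTail_self l (hk.trans h)).trans ?_
    exact Nat.le_induction (P := fun m _ => meanTail m l ≤ meanTail k l) le_rfl
      (fun m hm ih => (meanTail_succ_left m l (hk.trans hm)).trans ih) l h
  · exact (half_le_meanTail_self k hk).trans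
      (antitone_nat_of_succ_le (fun m => meanTail_succ_right k m hk) h)

/-- A binomial random variable with `N` trials and success probability `P ∈ [0,1]` is at
least `⌊N·P⌋` with probability at least `1/2`:
`Σ_{i = ⌊N·P⌋}^{N} (N choose i) Pⁱ (1−P)^{N−i} ≥ 1/2`. -/
theorem binomial_median_lower (N : ℕ) (P : ℝ) (hP0 : 0 ≤ P) (hP1 : P ≤ 1) :
    (1 : ℝ) / 2 ≤
      ∑ i ∈ Finset.Icc (⌊(N : ℝ) * P⌋₊) N,
        (N.choose i : ℝ) * P ^ i * (1 - P) ^ (N - i) := by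
  change _ ≤ binTail N ⌊(N : ℝ) * P⌋₊ P
  have hfl : (⌊(N : ℝ) * P⌋₊ : ℝ) ≤ N * P := Nat.floor_le (by positivity)
  generalize ⌊(N : ℝ) * P⌋₊ = k at hfl
  rcases Nat.eq_zero_or_pos k with rfl | hk
  · rw [binTail_zero]
    norm_num
  have hkN : k ≤ N := by
    exact_mod_cast hfl.trans (mul_le_of_le_one_right (Nat.cast_nonneg N) hP1)
  obtain ⟨l, rfl⟩ := Nat.exists_eq_add_of_le hkN
  refine (half_le_meanTail k l hk).trans ?_
  have hk' : (0 : ℝ) < k := by exact_mod_cast hk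
  push_cast at hfl
  have hle : (k : ℝ) / (k + l) ≤ P := by
    rw [div_le_iff₀ (by positivity)]
    linarith
  obtain ⟨j, rfl⟩ := Nat.exists_eq_add_of_le' hk
  exact binTail_monotoneOn _ j (by omega) ⟨by positivity, hle.trans hP1⟩ ⟨hP0, hP1⟩ hle
end
end
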